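/- Let p and q be primes satisfying conditions (2). Then the 2-class group of the triquadratic field F_pq = Q(√p, √(2q), √(-2)) is isomorphic to Z/2Z × Z/2Z. -/

import Mathlib

noncomputable section

open IntermediateField NumberField

/-- Conditions (2). -/
def Cond2 (p q : ℕ) : Prop :=
  p.Prime ∧ q.Prime ∧ p % 4 = 3 ∧ q % 4 = 3 ∧
    jacobiSym 2 p = -1 ∧ jacobiSym 2 q = 1 ∧ jacobiSym (p : ℤ) q = -1

/-- The triquadratic field `F_pq = ℚ(√p, √(2q), √(-2))` as a subfield of `ℂ`,
where `√(-2) = i√2`. -/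
def Ff (p q : ℕ) : IntermediateField ℚ ℂ :=
  adjoin ℚ {((Real.sqrt p : ℝ) : ℂ), ((Real.sqrt (2 * q) : ℝ) : ℂ),
    Complex.I * ((Real.sqrt 2 : ℝ) : ℂ)}

/-!
Let `A = ℚ(√-2)`, `B = ℚ(√-q)` and `M = AB`, so that `F_pq` is `K = M(√p)`, and let `σ` generate
`Gal(K / M)`. The class number `h` of `M` is odd, and units of `M` that are norms of elements of `K`
are norms of units. By Hilbert 90, every class of `K` killed by `2` therefore contains a
`σ`-invariant ideal, so it is a product of classes of ideals of `M` and of ramified primes, which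
are accounted for by a prime `T` over `2` and an ideal `P₁` over `p`. Hence the classes killed by
`2` are `1`, `[T] ^ h`, `[P₁]` and `[P₁] [T] ^ h`.

None of the last three is a square. The norm of a generator of an ideal of norm `2 n ^ 2` would be
`2 n ^ 2`, a norm from `ℚ(√p)`, although `2` is not a square modulo `p`. A generator of `P₁ J ^ 2`
would produce some `± p e ^ 2` in `B` that is a norm from both `B(√p)` and `B(√-2)`, which is
impossible in `ℚ₂`, into which `B` embeds. So the Sylow `2`-subgroup has exponent `2` and order `4`.
-/

section Quadratic

variable {F L : Type*} [Field F] [Field L] [Algebra F L] {s : L}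

/-- `L = F(s)` is a quadratic extension generated by a square root `s`, and `σ` is its nontrivial
automorphism. -/
structure IsQuadGen (s : L) (σ : L ≃ₐ[F] L) : Prop where
  map_eq_neg : σ s = -s
  neg_ne : -s ≠ s
  exists_eq (z : L) : ∃ x y : F, z = algebraMap F L x + algebraMap F L y * s

theorem finrank_eq_two_of_exists_eq (hs : s ∉ (algebraMap F L).range)
    (gen : ∀ z : L, ∃ x y : F, z = algebraMap F L x + algebraMap F L y * s) :
    Module.finrank F L = 2 := by
  have independent : LinearIndependent F ![1, s] := by
    refine LinearIndependent.pair_iff.2 fun x y hxy => ?_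
    simp only [Algebra.smul_def, mul_one] at hxy
    obtain rfl : y = 0 := by
      by_contra hy
      have hy' : algebraMap F L y ≠ 0 := by simpa using hy
      refine hs ⟨-x / y, ?_⟩
      rw [map_div₀, map_neg, div_eq_iff hy']
      linear_combination -hxy
    simpa using hxy
  have spanning : ⊤ ≤ Submodule.span F (Set.range ![1, s]) := by
    intro z _
    obtain ⟨x, y, rfl⟩ := gen z
    rw [Matrix.range_cons, Matrix.range_cons, Matrix.range_empty, Set.union_empty,
      Set.singleton_union, Submodule.mem_span_pair]
    exact ⟨x, y, by simp [Algebra.smul_def]⟩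
  simpa using Module.finrank_eq_card_basis (Module.Basis.mk independent spanning)

theorem exists_isQuadGen [Algebra.IsSeparable F L] {d : F} (hd : algebraMap F L d = s ^ 2)
    (hs : s ∉ (algebraMap F L).range)
    (gen : ∀ z : L, ∃ x y : F, z = algebraMap F L x + algebraMap F L y * s) :
    ∃ σ : L ≃ₐ[F] L, IsQuadGen s σ := by
  have : Algebra.IsQuadraticExtension F L := ⟨finrank_eq_two_of_exists_eq hs gen⟩
  obtain ⟨σ, hσ⟩ : ∃ σ : L ≃ₐ[F] L, σ s ≠ s := by
    by_contra! h
    exact hs (IntermediateField.mem_bot.1 ((IsGalois.mem_bot_iff_fixed (F := F) s).2 h))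
  have hneg : σ s = -s := by
    have : σ s ^ 2 = s ^ 2 := by rw [← map_pow, ← hd, σ.commutes]
    exact (sq_eq_sq_iff_eq_or_eq_neg.1 this).resolve_left hσ
  exact ⟨σ, hneg, hneg ▸ hσ, gen⟩

theorem exists_eq_add_mul_of_mem_adjoin {d : F} (hd : algebraMap F L d = s ^ 2) {z : L}
    (hz : z ∈ F⟮s⟯) : ∃ x y : F, z = algebraMap F L x + algebraMap F L y * s := by
  have hs : IsIntegral F s := IsIntegral.of_pow two_pos (hd ▸ isIntegral_algebraMap)
  rw [← IntermediateField.mem_toSubalgebra,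
    adjoin_simple_toSubalgebra_of_isAlgebraic hs.isAlgebraic] at hz
  induction hz using Algebra.adjoin_induction with
  | mem z hz => exact ⟨0, 1, by simp [Set.mem_singleton_iff.1 hz]⟩
  | algebraMap z => exact ⟨z, 0, by simp⟩
  | add z w _ _ hz hw =>
    obtain ⟨x, y, rfl⟩ := hz
    obtain ⟨x', y', rfl⟩ := hw
    exact ⟨x + x', y + y', by simp only [map_add]; ring⟩
  | mul z w _ _ hz hw =>
    obtain ⟨x, y, rfl⟩ := hz
    obtain ⟨x', y', rfl⟩ := hw
    exact ⟨x * x' + d * y * y', x * y' + x' * y, by simp only [map_add, map_mul, hd]; ring⟩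

theorem mem_range_or_mul_mem_range_of_sq_eq [NeZero (2 : F)] {r : L} {d e x y : F}
    (hd : algebraMap F L d = s ^ 2) (he : algebraMap F L e = r ^ 2)
    (hr : r = algebraMap F L x + algebraMap F L y * s) :
    r ∈ (algebraMap F L).range ∨ r * s ∈ (algebraMap F L).range := by
  by_cases hx : x = 0
  · exact .inr ⟨y * d, by rw [hr, hx, map_mul, hd, map_zero]; ring⟩
  by_cases hy : y = 0
  · exact .inl ⟨x, by rw [hr, hy, map_zero]; ring⟩
  have hxy : algebraMap F L (2 * x * y) ≠ 0 := by
    simpa using ⟨⟨NeZero.ne (2 : F), hx⟩, hy⟩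
  have hs : s = algebraMap F L ((e - x ^ 2 - y ^ 2 * d) / (2 * x * y)) := by
    rw [map_div₀, eq_div_iff hxy]
    simp only [map_sub, map_mul, map_pow, map_ofNat, hd, he, hr]
    ring
  exact .inl ⟨x + y * ((e - x ^ 2 - y ^ 2 * d) / (2 * x * y)),
    by rw [map_add, map_mul, ← hs, ← hr]⟩

namespace IsQuadGen

variable {σ : L ≃ₐ[F] L} (h : IsQuadGen s σ)
include h

theorem notMem_range : s ∉ (algebraMap F L).range := by
  rintro ⟨x, rfl⟩
  exact h.neg_ne (by rw [← h.map_eq_neg, σ.commutes])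

theorem isQuadraticExtension : Algebra.IsQuadraticExtension F L :=
  ⟨finrank_eq_two_of_exists_eq h.notMem_range h.exists_eq⟩

theorem map_add_mul (x y : F) :
    σ (algebraMap F L x + algebraMap F L y * s) = algebraMap F L x - algebraMap F L y * s := by
  simp [h.map_eq_neg, sub_eq_add_neg]

theorem involutive : Function.Involutive σ := by
  intro z
  obtain ⟨x, y, rfl⟩ := h.exists_eq z
  simp [h.map_eq_neg]

theorem ne_one : σ ≠ 1 := by
  rintro rfl
  exact h.neg_ne h.map_eq_neg.symm

theorem algebraMap_norm (z : L) : algebraMap F L (Algebra.norm F z) = z * σ z := by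
  have := h.isQuadraticExtension
  classical
  have hcard : ({1, σ} : Finset (L ≃ₐ[F] L)).card = 2 := Finset.card_pair h.ne_one.symm
  have huniv : ({1, σ} : Finset (L ≃ₐ[F] L)) = Finset.univ := by
    refine Finset.eq_univ_of_card _ (le_antisymm (Finset.card_le_univ _) ?_)
    rw [hcard, ← Algebra.IsQuadraticExtension.finrank_eq_two F L]
    exact AlgEquiv.card_le
  have : IsGalois F L := .of_card_aut_eq_finrank F L (by
    rw [Nat.card_eq_fintype_card, ← Finset.card_univ, ← huniv, hcard,
      Algebra.IsQuadraticExtension.finrank_eq_two])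
  rw [Algebra.norm_eq_prod_automorphisms, ← huniv, Finset.prod_pair h.ne_one.symm,
    AlgEquiv.one_apply]

theorem norm_add_mul {d : F} (hd : algebraMap F L d = s ^ 2) (x y : F) :
    Algebra.norm F (algebraMap F L x + algebraMap F L y * s) = x ^ 2 - d * y ^ 2 := by
  apply (algebraMap F L).injective
  rw [h.algebraMap_norm, h.map_add_mul]
  simp only [map_sub, map_mul, map_pow, hd]
  ring

end IsQuadGen

theorem exists_norm_eq_sq_sub_mul_sq [FiniteDimensional F L] [Algebra.IsSeparable F L] {d : F}
    (hd : algebraMap F L d = s ^ 2) (hs : s ∉ (algebraMap F L).range) (α : L) :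
    ∃ x y : F, Algebra.norm F α = x ^ 2 - d * y ^ 2 := by
  let g : F⟮s⟯ := AdjoinSimple.gen F s
  have hdg : algebraMap F F⟮s⟯ d = g ^ 2 := Subtype.ext hd
  have gen (z : F⟮s⟯) : ∃ x y : F, z = algebraMap F _ x + algebraMap F _ y * g := by
    obtain ⟨x, y, hz⟩ := exists_eq_add_mul_of_mem_adjoin hd z.2
    exact ⟨x, y, Subtype.ext hz⟩
  have hg : g ∉ (algebraMap F F⟮s⟯).range := fun ⟨x, hx⟩ => hs ⟨x, congrArg Subtype.val hx⟩
  obtain ⟨σ, hσ⟩ := exists_isQuadGen hdg hg gen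
  obtain ⟨x, y, hxy⟩ := gen (Algebra.norm F⟮s⟯ α)
  exact ⟨x, y, by rw [← Algebra.norm_norm (S := F⟮s⟯), hxy, hσ.norm_add_mul hdg]⟩

end Quadratic

/-- Hilbert 90 for an involution, with denominators cleared. -/
theorem exists_mul_map_eq_of_mul_map_eq {R G : Type*} [CommRing R] [IsDomain R] [FunLike G R R]
    [RingHomClass G R R] {τ : G} (hτ : Function.Involutive τ) (hne : ∃ w, τ w ≠ w)
    {x y : R} (hy : y ≠ 0) (h : x * τ x = y * τ y) : ∃ b ≠ 0, x * τ b = y * b := by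
  by_cases hxy : x + y = 0
  · obtain ⟨w, hw⟩ := hne
    refine ⟨w - τ w, sub_ne_zero.2 hw.symm, ?_⟩
    rw [map_sub, hτ]
    linear_combination (τ w - w) * hxy
  · have hτy : τ y ≠ 0 := (map_ne_zero_iff τ hτ.injective).2 hy
    refine ⟨τ y * (x + y), mul_ne_zero hτy hxy, ?_⟩
    rw [map_mul, map_add, hτ]
    linear_combination y * h

theorem ideal_eq_of_le_of_absNorm_le {R : Type*} [CommRing R] [IsDedekindDomain R]
    [Module.Free ℤ R] [Module.Finite ℤ R] {I J : Ideal R} (hI : I ≠ ⊥) (hIJ : I ≤ J)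
    (h : Ideal.absNorm I ≤ Ideal.absNorm J) : I = J := by
  obtain ⟨C, rfl⟩ := Ideal.dvd_iff_le.2 hIJ
  have hpos : 0 < Ideal.absNorm J * Ideal.absNorm C := by
    rw [← map_mul]
    exact Nat.pos_of_ne_zero (Ideal.absNorm_eq_zero_iff.not.2 hI)
  rw [map_mul] at h
  have hC : Ideal.absNorm C = 1 :=
    le_antisymm (le_of_mul_le_mul_left (by simpa using h) (pos_of_mul_pos_left hpos zero_le))
      (pos_of_mul_pos_right hpos zero_le)
  rw [Ideal.absNorm_eq_one_iff] at hC
  rw [hC, Ideal.mul_top]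

section IntAut

variable {F L : Type*} [Field F] [Field L] [Algebra F L]

/-- The automorphism of the ring of integers induced by an automorphism of the field. -/
def intAut (σ : L ≃ₐ[F] L) : 𝓞 L ≃ₐ[𝓞 F] 𝓞 L := RingOfIntegers.mapAlgEquiv σ

@[simp] theorem coe_intAut (σ : L ≃ₐ[F] L) (x : 𝓞 L) : ((intAut σ x : 𝓞 L) : L) = σ x := rfl

theorem exists_intAut_apply_ne [NumberField L] {σ : L ≃ₐ[F] L} (hσ : σ ≠ 1) :
    ∃ w : 𝓞 L, intAut σ w ≠ w := by
  by_contra! hfix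
  refine hσ (AlgEquiv.ext fun z => ?_)
  obtain ⟨x, y, -, rfl⟩ := IsFractionRing.div_surjective (A := 𝓞 L) z
  have hcoe (w : 𝓞 L) : σ (w : L) = w := congrArg (algebraMap (𝓞 L) L) (hfix w)
  rw [map_div₀, AlgEquiv.one_apply, hcoe, hcoe]

theorem map_intAut_map_algebraMap (σ : L ≃ₐ[F] L) (J : Ideal (𝓞 F)) :
    (J.map (algebraMap (𝓞 F) (𝓞 L))).map (intAut σ) = J.map (algebraMap (𝓞 F) (𝓞 L)) := by
  refine (Ideal.map_map (algebraMap (𝓞 F) (𝓞 L))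
    ((intAut σ : 𝓞 L ≃ₐ[𝓞 F] 𝓞 L) : 𝓞 L →+* 𝓞 L)).trans ?_
  congr 1
  ext x
  simp

theorem absNorm_map_intAut [NumberField F] [NumberField L] (σ : L ≃ₐ[F] L) (I : Ideal (𝓞 L)) :
    Ideal.absNorm (I.map (intAut σ)) = Ideal.absNorm I := by
  rw [← Ideal.absNorm_relNorm (R := 𝓞 F) (S := 𝓞 L), Ideal.relNorm_map_algEquiv,
    Ideal.absNorm_relNorm]

end IntAut

theorem absNorm_map_algebraMap_of_isQuadraticExtension {F L : Type*} [Field F] [Field L]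
    [NumberField F] [NumberField L] [Algebra F L] [Algebra.IsQuadraticExtension F L]
    (J : Ideal (𝓞 F)) :
    Ideal.absNorm (J.map (algebraMap (𝓞 F) (𝓞 L))) = Ideal.absNorm J ^ 2 := by
  rw [Ideal.absNorm_algebraMap, ← IsFractionRing.finrank_eq (𝓞 F) F (𝓞 L) L,
    Algebra.IsQuadraticExtension.finrank_eq_two F L]

namespace IsQuadGen

variable {F L : Type*} [Field F] [Field L] [NumberField F] [NumberField L] [Algebra F L]
  {s : L} {σ : L ≃ₐ[F] L} (h : IsQuadGen s σ)
include h

omit [NumberField F] [NumberField L] in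
theorem intAut_involutive : Function.Involutive (intAut σ) := fun x =>
  RingOfIntegers.coe_injective (h.involutive x)

theorem algebraMap_intNorm (x : 𝓞 L) :
    algebraMap (𝓞 F) (𝓞 L) (Algebra.intNorm (𝓞 F) (𝓞 L) x) = x * intAut σ x := by
  apply RingOfIntegers.coe_injective
  rw [map_mul, ← IsScalarTower.algebraMap_apply, IsScalarTower.algebraMap_apply (𝓞 F) F L,
    Algebra.algebraMap_intNorm (K := F) (L := L), h.algebraMap_norm]
  rfl

theorem map_relNorm (I : Ideal (𝓞 L)) :
    (Ideal.relNorm (𝓞 F) I).map (algebraMap (𝓞 F) (𝓞 L)) = I * I.map (intAut σ) := by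
  have := h.isQuadraticExtension
  by_cases hI : I = ⊥
  · simp [hI]
  apply ideal_eq_of_le_of_absNorm_le
  · rwa [Ne, Ideal.map_eq_bot_iff_of_injective (FaithfulSMul.algebraMap_injective _ _),
      Ideal.relNorm_eq_bot_iff]
  · rw [Ideal.map_relNorm, Ideal.span_le]
    rintro _ ⟨x, hx, rfl⟩
    rw [Function.comp_apply, h.algebraMap_intNorm]
    exact Ideal.mul_mem_mul hx (Ideal.mem_map_of_mem _ hx)
  · rw [absNorm_map_algebraMap_of_isQuadraticExtension, Ideal.absNorm_relNorm, map_mul,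
      absNorm_map_intAut, pow_two]

section InvariantPrime

variable {P : Ideal (𝓞 L)} [hp : P.IsPrime] (h0 : P ≠ ⊥) (hP : P.map (intAut σ) = P)
include h0 hP

theorem exists_map_under_pow :
    ∃ f : ℕ, f ≠ 0 ∧ Ideal.relNorm (𝓞 F) P = (P.under (𝓞 F)) ^ f ∧
      ((P.under (𝓞 F)).map (algebraMap (𝓞 F) (𝓞 L))) ^ f = P ^ 2 := by
  have : P.IsMaximal := hp.isMaximal h0
  have : (P.under (𝓞 F)).IsMaximal := Ideal.IsMaximal.under _ P
  have hrel := Ideal.relNorm_eq_pow_of_isMaximal P (P.under (𝓞 F))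
  have hsq := h.map_relNorm P
  rw [hP, hrel, Ideal.map_pow, ← pow_two] at hsq
  refine ⟨_, fun hf => hp.ne_top ?_, hrel, hsq⟩
  rw [hf, pow_zero] at hsq
  rw [← top_le_iff, ← Ideal.one_eq_top, hsq]
  exact Ideal.pow_le_self two_ne_zero

theorem absNorm_under_of_sq_dvd
    (hram : P ^ 2 ∣ (P.under (𝓞 F)).map (algebraMap (𝓞 F) (𝓞 L))) :
    Ideal.absNorm (P.under (𝓞 F)) = Ideal.absNorm P := by
  obtain ⟨f, hf, hrel, hsq⟩ := h.exists_map_under_pow h0 hP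
  have hN0 : Ideal.absNorm P ≠ 0 := by rwa [Ne, Ideal.absNorm_eq_zero_iff]
  have hN1 : Ideal.absNorm P ≠ 1 := by rw [Ne, Ideal.absNorm_eq_one_iff]; exact hp.ne_top
  have hf1 : f = 1 := by
    have hdvd := map_dvd Ideal.absNorm (pow_dvd_pow_of_dvd hram f)
    rw [hsq, ← pow_mul, map_pow, map_pow, Nat.pow_dvd_pow_iff_le_right (by omega)] at hdvd
    omega
  rw [← Ideal.absNorm_relNorm (R := 𝓞 F) (S := 𝓞 L) P, hrel, hf1, pow_one]

theorem sub_intAut_mem_of_sq_dvd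
    (hram : P ^ 2 ∣ (P.under (𝓞 F)).map (algebraMap (𝓞 F) (𝓞 L))) (x : 𝓞 L) :
    x - intAut σ x ∈ P := by
  have hcard := h.absNorm_under_of_sq_dvd h0 hP hram
  rw [Ideal.absNorm_apply, Ideal.absNorm_apply, Submodule.cardQuot_apply,
    Submodule.cardQuot_apply] at hcard
  have hfin : Finite (𝓞 L ⧸ P) :=
    (Ideal.absNorm_ne_zero_iff P).1 (Ideal.absNorm_eq_zero_iff.not.2 h0)
  have hbij := (Nat.bijective_iff_injective_and_card
    (Ideal.quotientMap P (algebraMap (𝓞 F) (𝓞 L)) (le_refl (P.under (𝓞 F))))).2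
    ⟨Ideal.quotientMap_injective, hcard⟩
  obtain ⟨y, hy⟩ := hbij.2 (Ideal.Quotient.mk P x)
  obtain ⟨y, rfl⟩ := Ideal.Quotient.mk_surjective y
  rw [Ideal.quotientMap_mk, Ideal.Quotient.eq] at hy
  have hσy := Ideal.mem_map_of_mem (intAut σ) hy
  rw [hP, map_sub, AlgEquiv.commutes] at hσy
  simpa using sub_mem hσy hy

theorem map_under_eq_of_not_sq_dvd
    (hram : ¬ P ^ 2 ∣ (P.under (𝓞 F)).map (algebraMap (𝓞 F) (𝓞 L))) :
    (P.under (𝓞 F)).map (algebraMap (𝓞 F) (𝓞 L)) = P := by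
  obtain ⟨f, hf, -, hsq⟩ := h.exists_map_under_pow h0 hP
  obtain ⟨k, hk, hpow⟩ :=
    (dvd_prime_pow (Ideal.prime_of_isPrime h0 hp) 2).1 (hsq ▸ dvd_pow_self _ hf)
  rw [associated_iff_eq] at hpow
  rw [hpow] at hram ⊢
  interval_cases k
  · have hle : (P.under (𝓞 F)).map (algebraMap (𝓞 F) (𝓞 L)) ≤ P := Ideal.map_comap_le
    rw [hpow, pow_zero, Ideal.one_eq_top, top_le_iff] at hle
    exact absurd hle hp.ne_top
  · rw [pow_one]
  · exact absurd dvd_rfl hram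

end InvariantPrime

theorem exists_dvd_mem_of_map_eq {S : Set (Ideal (𝓞 L))}
    (hext : ∀ J : Ideal (𝓞 F), J ≠ ⊥ → J.map (algebraMap (𝓞 F) (𝓞 L)) ∈ S)
    (hram : ∀ P : Ideal (𝓞 L), P.IsPrime → P ≠ ⊥ → P.map (intAut σ) = P →
      (∀ x, x - intAut σ x ∈ P) → P ∈ S)
    {I : Ideal (𝓞 L)} (hI : I ≠ ⊥) (htop : I ≠ ⊤) (hσ : I.map (intAut σ) = I) :
    ∃ D ∈ S, D ≠ ⊤ ∧ D.map (intAut σ) = D ∧ D ∣ I := by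
  obtain ⟨P, hP, hIP⟩ := Ideal.exists_le_maximal I htop
  have hP0 : P ≠ ⊥ := by rintro rfl; exact hI (le_bot_iff.1 hIP)
  have hPr : P.IsPrime := hP.isPrime
  by_cases hPσ : P.map (intAut σ) = P
  · refine ⟨P, ?_, hP.ne_top, hPσ, Ideal.dvd_iff_le.2 hIP⟩
    by_cases hsq : P ^ 2 ∣ (P.under (𝓞 F)).map (algebraMap (𝓞 F) (𝓞 L))
    · exact hram P hPr hP0 hPσ (h.sub_intAut_mem_of_sq_dvd hP0 hPσ hsq)
    · have hmap := h.map_under_eq_of_not_sq_dvd hP0 hPσ hsq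
      rw [← hmap]
      refine hext _ fun hbot => hP0 ?_
      rw [← hmap, hbot, Ideal.map_bot]
  · have hN0 : Ideal.relNorm (𝓞 F) P ≠ ⊥ := by rwa [Ne, Ideal.relNorm_eq_bot_iff]
    refine ⟨_, hext _ hN0, ?_, map_intAut_map_algebraMap σ _, ?_⟩ <;> rw [h.map_relNorm P]
    · exact fun hmul => hP.ne_top (top_le_iff.1 (hmul ▸ Ideal.mul_le_left))
    · have hPm : (P.map (intAut σ)).IsMaximal := Ideal.map_isMaximal_of_equiv (intAut σ)
      have hcop : IsCoprime P (P.map (intAut σ)) :=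
        Ideal.isCoprime_iff_sup_eq.2 (hP.coprime_of_ne hPm (Ne.symm hPσ))
      refine hcop.mul_dvd (Ideal.dvd_iff_le.2 hIP) (Ideal.dvd_iff_le.2 ?_)
      exact hσ ▸ Ideal.map_mono hIP

/-- Peel off a nontrivial invariant divisor and induct on the norm. -/
theorem mem_of_map_eq {S : Submonoid (Ideal (𝓞 L))}
    (hext : ∀ J : Ideal (𝓞 F), J ≠ ⊥ → J.map (algebraMap (𝓞 F) (𝓞 L)) ∈ S)
    (hram : ∀ P : Ideal (𝓞 L), P.IsPrime → P ≠ ⊥ → P.map (intAut σ) = P →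
      (∀ x, x - intAut σ x ∈ P) → P ∈ S)
    {I : Ideal (𝓞 L)} (hI : I ≠ ⊥) (hσ : I.map (intAut σ) = I) : I ∈ S := by
  induction hn : Ideal.absNorm I using Nat.strong_induction_on generalizing I with
  | _ n ih =>
  by_cases htop : I = ⊤
  · rw [htop, ← Ideal.one_eq_top]
    exact one_mem S
  obtain ⟨D, hD, hDt, hDσ, C, rfl⟩ :=
    h.exists_dvd_mem_of_map_eq (S := (S : Set (Ideal (𝓞 L)))) hext hram hI htop hσ
  obtain ⟨hD0, hC0⟩ := mul_ne_zero_iff.1 hI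
  rw [Ideal.map_mul, hDσ] at hσ
  refine mul_mem hD (ih (Ideal.absNorm C) ?_ hC0 (mul_left_cancel₀ hD0 hσ) rfl)
  have hND0 : Ideal.absNorm D ≠ 0 := Ideal.absNorm_eq_zero_iff.not.2 hD0
  have hND1 : Ideal.absNorm D ≠ 1 := Ideal.absNorm_eq_one_iff.not.2 hDt
  have hNC0 : Ideal.absNorm C ≠ 0 := Ideal.absNorm_eq_zero_iff.not.2 hC0
  rw [← hn, map_mul]
  exact lt_mul_of_one_lt_left (by omega) (by omega)

section Scaling

variable (hnorm : ∀ (u : (𝓞 F)ˣ) (α : L), Algebra.norm F α = (u : 𝓞 F) →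
  ∃ e : (𝓞 L)ˣ, Algebra.norm F ((e : 𝓞 L) : L) = (u : 𝓞 F))
include hnorm

theorem exists_mul_intAut_eq_of_sq_eq_span {I : Ideal (𝓞 L)} {z : 𝓞 L} {n : 𝓞 F} (hn0 : n ≠ 0)
    (hz : I ^ 2 = Ideal.span {z}) (hn : Ideal.relNorm (𝓞 F) I = Ideal.span {n}) :
    ∃ e : (𝓞 L)ˣ, z * intAut σ z = algebraMap (𝓞 F) (𝓞 L) n * e *
      intAut σ (algebraMap (𝓞 F) (𝓞 L) n * e) := by
  have hassoc : Ideal.span {n ^ 2} = Ideal.span {Algebra.intNorm (𝓞 F) (𝓞 L) z} := by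
    rw [← Ideal.span_singleton_pow, ← hn, ← map_pow, hz, Ideal.relNorm_singleton]
  obtain ⟨u, hu⟩ := Ideal.span_singleton_eq_span_singleton.1 hassoc
  have hnL : algebraMap (𝓞 F) F n ≠ 0 := by simpa using hn0
  have hzu : Algebra.norm F (z : L) = (n : F) ^ 2 * (u : 𝓞 F) := by
    rw [← map_pow, ← map_mul (algebraMap (𝓞 F) F), hu]
    exact (Algebra.algebraMap_intNorm (A := 𝓞 F) (K := F) (L := L) (B := 𝓞 L) z).symm
  obtain ⟨e, he⟩ := hnorm u (z * algebraMap F L (n : F)⁻¹) (by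
    have := h.isQuadraticExtension
    rw [map_mul, hzu, Algebra.norm_algebraMap, Algebra.IsQuadraticExtension.finrank_eq_two]
    field_simp)
  have heu : Algebra.intNorm (𝓞 F) (𝓞 L) (e : 𝓞 L) = u := by
    apply RingOfIntegers.coe_injective
    refine Eq.trans ?_ he
    exact Algebra.algebraMap_intNorm (A := 𝓞 F) (K := F) (L := L) (B := 𝓞 L) _
  refine ⟨e, ?_⟩
  rw [map_mul, AlgEquiv.commutes, ← h.algebraMap_intNorm, ← hu, ← heu, map_mul, map_pow,
    h.algebraMap_intNorm]
  ring

/-- If `I ^ 2 = (z)` and `I` has relative norm `(n)`, then `z` and `n e` have the same norm for some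
unit `e`, so Hilbert 90 gives `b` with `z σ(b) = n e b`; scale `I` by `σ(b)`. -/
theorem exists_map_span_mul_eq
    (hpr : ∀ J : Ideal (𝓞 F), (J ^ 2).IsPrincipal → J.IsPrincipal)
    {I : Ideal (𝓞 L)} (hI : I ≠ ⊥) (hsq : (I ^ 2).IsPrincipal) :
    ∃ b : 𝓞 L, b ≠ 0 ∧ (Ideal.span {b} * I).map (intAut σ) = Ideal.span {b} * I := by
  obtain ⟨z, hz : I ^ 2 = Ideal.span {z}⟩ := hsq
  have hz0 : Ideal.span {z} ≠ ⊥ := hz ▸ pow_ne_zero 2 hI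
  obtain ⟨n, hn : Ideal.relNorm (𝓞 F) I = Ideal.span {n}⟩ : (Ideal.relNorm (𝓞 F) I).IsPrincipal :=
    hpr _ ⟨_, by rw [← map_pow, hz]; exact Ideal.relNorm_singleton _ z⟩
  have hn0 : n ≠ 0 := by
    rintro rfl
    exact hI (Ideal.relNorm_eq_bot_iff.1 (hn.trans Ideal.span_singleton_zero))
  have hnI : Ideal.span {algebraMap (𝓞 F) (𝓞 L) n} = I * I.map (intAut σ) := by
    rw [← h.map_relNorm, hn, Ideal.map_span, Set.image_singleton]
  obtain ⟨e, he⟩ := h.exists_mul_intAut_eq_of_sq_eq_span hnorm hn0 hz hn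
  obtain ⟨b, hb0, hb⟩ := exists_mul_map_eq_of_mul_map_eq h.intAut_involutive
    (exists_intAut_apply_ne h.ne_one) (mul_ne_zero (by simpa using hn0) e.ne_zero) he
  have hσb : (Ideal.span {intAut σ b}).map (intAut σ) = Ideal.span {b} := by
    rw [Ideal.map_span, Set.image_singleton, h.intAut_involutive]
  refine ⟨intAut σ b, by simpa using hb0, mul_left_cancel₀ hz0 ?_⟩
  calc Ideal.span {z} * (Ideal.span {intAut σ b} * I).map (intAut σ)
      = Ideal.span {b} * I * (I * I.map (intAut σ)) := by rw [Ideal.map_mul, hσb, ← hz]; ring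
    _ = Ideal.span {z * intAut σ b} * I := by
      rw [← hnI, hb, mul_right_comm _ (e : 𝓞 L), Ideal.span_singleton_mul_right_unit e.isUnit,
        ← Ideal.span_singleton_mul_span_singleton _ b]
      ring
    _ = Ideal.span {z} * (Ideal.span {intAut σ b} * I) := by
      rw [← Ideal.span_singleton_mul_span_singleton, mul_assoc]

end Scaling

end IsQuadGen

/-- Congruences and quadratic residues that follow from conditions (2). -/
structure Residues (p q : ℕ) : Prop where
  prime_p : p.Prime
  prime_q : q.Prime
  p_mod : p % 8 = 3
  q_mod : q % 8 = 7
  neg_one_p : ¬ IsSquare (-1 : ZMod p)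
  two_p : ¬ IsSquare (2 : ZMod p)
  neg_two_p : IsSquare (-2 : ZMod p)
  neg_q_p : ¬ IsSquare (-q : ZMod p)
  two_q_p : ¬ IsSquare (2 * q : ZMod p)
  neg_one_q : ¬ IsSquare (-1 : ZMod q)
  neg_two_q : ¬ IsSquare (-2 : ZMod q)
  p_q : ¬ IsSquare (p : ZMod q)
  two_p_q : ¬ IsSquare (2 * p : ZMod q)

theorem Cond2.p_mod_eight {p q : ℕ} (h : Cond2 p q) : p % 8 = 3 := by
  obtain ⟨-, -, hp4, -, h2p, -⟩ := h
  rw [jacobiSym.at_two (Nat.odd_iff.2 (by omega)), ZMod.χ₈_nat_eq_if_mod_eight] at h2p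
  grind

theorem Cond2.q_mod_eight {p q : ℕ} (h : Cond2 p q) : q % 8 = 7 := by
  obtain ⟨-, -, -, hq4, -, h2q, -⟩ := h
  rw [jacobiSym.at_two (Nat.odd_iff.2 (by omega)), ZMod.χ₈_nat_eq_if_mod_eight] at h2q
  grind

theorem Cond2.residues {p q : ℕ} (h : Cond2 p q) : Residues p q := by
  have p8 := h.p_mod_eight
  have q8 := h.q_mod_eight
  obtain ⟨hp, hq, hp4, hq4, h2p, h2q, hpq⟩ := h
  have : Fact p.Prime := ⟨hp⟩
  have hqp : jacobiSym q p = 1 := by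
    rw [jacobiSym.quadratic_reciprocity_three_mod_four hq4 hp4, hpq, neg_neg]
  have neg_one {n : ℕ} (hn : n % 4 = 3) : jacobiSym (-1) n = -1 := by
    rw [jacobiSym.at_neg_one (Nat.odd_iff.2 (by omega)), ZMod.χ₄_nat_three_mod_four hn]
  have hp1 := neg_one hp4
  have hq1 := neg_one hq4
  have nonsquare {a : ℤ} {n : ℕ} (ha : jacobiSym a n = -1) : ¬ IsSquare (a : ZMod n) :=
    ZMod.nonsquare_of_jacobiSym_eq_neg_one ha
  have nonsquare_mul {a b : ℤ} {n : ℕ} (hab : jacobiSym a n * jacobiSym b n = -1) :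
      ¬ IsSquare ((a * b : ℤ) : ZMod n) :=
    nonsquare ((jacobiSym.mul_left a b n).trans hab)
  exact {
    prime_p := hp
    prime_q := hq
    p_mod := p8
    q_mod := q8
    neg_one_p := by simpa using nonsquare hp1
    two_p := by simpa using nonsquare h2p
    neg_two_p := (ZMod.exists_sq_eq_neg_two_iff (by omega)).2 (.inr p8)
    neg_q_p := by simpa using nonsquare_mul (a := -1) (b := q) (by rw [hp1, hqp]; rfl)
    two_q_p := by simpa using nonsquare_mul (a := 2) (b := q) (by rw [h2p, hqp]; rfl)
    neg_one_q := by simpa using nonsquare hq1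
    neg_two_q := by simpa using nonsquare_mul (a := -1) (b := 2) (by rw [hq1, h2q]; rfl)
    p_q := by simpa using nonsquare hpq
    two_p_q := by simpa using nonsquare_mul (a := 2) (b := p) (by rw [h2q, hpq]; rfl) }

section Pell

theorem exists_eq_mul_sq_of_coprime {m n D w : ℕ} (hmn : m.Coprime n) (hD : 0 < D)
    (h : m * n = D * w ^ 2) :
    ∃ D₁ D₂ a b : ℕ, D₁ * D₂ = D ∧ m = D₁ * a ^ 2 ∧ n = D₂ * b ^ 2 := by
  obtain ⟨D₁, D₂, ⟨m', rfl⟩, ⟨n', rfl⟩, rfl⟩ :=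
    exists_dvd_and_dvd_of_dvd_mul (show D ∣ m * n from ⟨_, h⟩)
  have hsq : m' * n' = w ^ 2 := Nat.eq_of_mul_eq_mul_left hD (by linarith)
  have hcop : m'.Coprime n' := hmn.coprime_mul_left.coprime_mul_left_right
  obtain ⟨a, rfl⟩ := exists_eq_pow_of_mul_eq_pow (Nat.isUnit_iff.2 hcop) hsq
  obtain ⟨b, rfl⟩ := exists_eq_pow_of_mul_eq_pow (Nat.isUnit_iff.2 hcop.symm)
    ((mul_comm _ _).trans hsq)
  exact ⟨D₁, D₂, a, b, rfl, rfl, rfl⟩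

theorem exists_eq_mul_succ_of_even {D : ℕ} {x y : ℤ} (h : x ^ 2 - D * y ^ 2 = 1) (hx : 1 < x)
    (hy : Even y) : ∃ m w : ℕ, x = 2 * m + 1 ∧ m * (m + 1) = D * w ^ 2 := by
  obtain ⟨w, rfl⟩ := hy
  have hodd : Odd x := by
    rw [← Int.not_even_iff_odd]
    rintro ⟨k, rfl⟩
    have : (4 : ℤ) ∣ 1 := ⟨k ^ 2 - D * w ^ 2, by linear_combination -h⟩
    omega
  obtain ⟨m, rfl⟩ := hodd
  lift m to ℕ using by omega
  refine ⟨m, w.natAbs, rfl, ?_⟩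
  zify
  rw [sq_abs]
  linarith

/-- Descent on the fundamental solution of the Pell equation: `D₂ = 1` would give a smaller
one. -/
theorem exists_mul_sq_eq_add_one {D : ℕ} (hD : ¬ IsSquare D)
    (heven : ∀ u v : ℤ, u ^ 2 - D * v ^ 2 = 1 → Even v) :
    ∃ D₁ D₂ a b : ℕ, D₁ * D₂ = D ∧ D₂ ≠ 1 ∧ D₂ * b ^ 2 = D₁ * a ^ 2 + 1 := by
  have hD0 : 0 < D := Nat.pos_of_ne_zero fun h => hD (h ▸ ⟨0, rfl⟩)
  obtain ⟨f, hf⟩ := Pell.IsFundamental.exists_of_not_isSquare (d := D) (by exact_mod_cast hD0)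
    (Int.isSquare_natCast_iff.not.2 hD)
  obtain ⟨m, w, hm, hmw⟩ := exists_eq_mul_succ_of_even f.prop hf.1 (heven _ _ f.prop)
  obtain ⟨D₁, D₂, a, b, hDD, ha, hb⟩ := exists_eq_mul_sq_of_coprime (by simp) hD0 hmw
  refine ⟨D₁, D₂, a, b, hDD, ?_, by omega⟩
  rintro rfl
  have hm0 : 0 < m := by have := hf.1; omega
  have hsol : (b : ℤ) ^ 2 - D * (a : ℤ) ^ 2 = 1 := by
    rw [mul_one] at hDD
    have : b ^ 2 = D * a ^ 2 + 1 := by rw [← hDD]; omega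
    zify at this
    linarith
  have hb1 : 1 < b := by
    by_contra hb1
    nlinarith
  have hle := hf.x_le_x (a := Pell.Solution₁.mk b a hsol) (by simpa using hb1)
  rw [Pell.Solution₁.x_mk, hm] at hle
  have : 2 * m + 1 ≤ b := by exact_mod_cast hle
  nlinarith

theorem exists_mul_sq_eq_add_two {D : ℕ} (hD : Odd D) {u v : ℤ} (huv : u ^ 2 - D * v ^ 2 = 1)
    (hv : Odd v) : ∃ D₁ D₂ a b : ℕ, D₁ * D₂ = D ∧ D₂ * b ^ 2 = D₁ * a ^ 2 + 2 := by
  have hDv : Odd ((D : ℤ) * v ^ 2) := ((Int.odd_coe_nat D).2 hD).mul hv.pow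
  have hu : Even u.natAbs := by
    rw [Int.natAbs_even, ← Int.even_pow' two_ne_zero, sub_eq_iff_eq_add.1 huv]
    exact odd_one.add_odd hDv
  have hu0 : u.natAbs ≠ 0 := by
    intro h0
    rw [Int.natAbs_eq_zero.1 h0] at huv
    have : (0 : ℤ) ≤ D * v ^ 2 := by positivity
    linarith
  obtain ⟨m, hm⟩ := Nat.exists_eq_succ_of_ne_zero hu0
  have hmodd : Odd m := by
    rw [hm, Nat.succ_eq_add_one, Nat.even_add_one, Nat.not_even_iff_odd] at hu
    exact hu
  have hmul : m * (m + 2) = D * v.natAbs ^ 2 := by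
    have hu2 : (u.natAbs : ℤ) ^ 2 = u ^ 2 := Int.natAbs_sq u
    rw [hm] at hu2
    zify at hu2 ⊢
    rw [sq_abs]
    linarith
  obtain ⟨D₁, D₂, a, b, hDD, ha, hb⟩ := exists_eq_mul_sq_of_coprime
    (Nat.coprime_self_add_right.2 hmodd.coprime_two_right) hD.pos hmul
  exact ⟨D₁, D₂, a, b, hDD, by omega⟩

theorem even_of_sq_sub_mul_sq_eq_one {D : ℕ} (hD : D % 4 = 2) (u v : ℤ)
    (h : u ^ 2 - D * v ^ 2 = 1) : Even v := by
  obtain ⟨E, hE⟩ : ∃ E : ℕ, D = 4 * E + 2 := ⟨D / 4, by omega⟩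
  by_contra hv
  obtain ⟨k, rfl⟩ := Int.not_even_iff_odd.1 hv
  have hu : u ^ 2 % 4 = 0 ∨ u ^ 2 % 4 = 1 := by
    rcases Int.even_or_odd' u with ⟨l, rfl | rfl⟩ <;> ring_nf <;> omega
  have : u ^ 2 = 4 * (E * (2 * k + 1) ^ 2 + 2 * k ^ 2 + 2 * k) + 3 := by
    rw [hE] at h
    push_cast at h
    linear_combination h
  omega

theorem not_isSquare_of_mod_four_eq_two {n : ℕ} (hn : n % 4 = 2) : ¬ IsSquare n := by
  rintro ⟨r, rfl⟩
  rcases Nat.even_or_odd' r with ⟨l, rfl | rfl⟩ <;> ring_nf at hn <;> omega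

theorem exists_mul_sq_eq_add_one_of_mod_four {D : ℕ} (hD : D % 4 = 2) :
    ∃ D₁ D₂ a b : ℕ, D₁ * D₂ = D ∧ D₂ ≠ 1 ∧ D₂ * b ^ 2 = D₁ * a ^ 2 + 1 :=
  exists_mul_sq_eq_add_one (not_isSquare_of_mod_four_eq_two hD) (even_of_sq_sub_mul_sq_eq_one hD)

section Residue

variable {D₁ D₂ a b l : ℕ} (h : D₂ * b ^ 2 = D₁ * a ^ 2 + 1)
include h

theorem isSquare_cast_of_dvd_left (hl : l ∣ D₁) : IsSquare (D₂ : ZMod l) := by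
  have hcast := congrArg (Nat.cast : ℕ → ZMod l) h
  push_cast [(ZMod.natCast_eq_zero_iff D₁ l).2 hl] at hcast
  exact ⟨D₂ * b, by linear_combination -(D₂ : ZMod l) * hcast⟩

theorem isSquare_neg_cast_of_dvd_right (hl : l ∣ D₂) : IsSquare (-D₁ : ZMod l) := by
  have hcast := congrArg (Nat.cast : ℕ → ZMod l) h
  push_cast [(ZMod.natCast_eq_zero_iff D₂ l).2 hl] at hcast
  exact ⟨D₁ * a, by linear_combination (D₁ : ZMod l) * hcast⟩

end Residue

end Pell

theorem eq_one_or_eq_two_of_mul_eq_two {c d : ℕ} (h : c * d = 2) :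
    c = 1 ∧ d = 2 ∨ c = 2 ∧ d = 1 := by
  rcases (Nat.dvd_prime Nat.prime_two).1 (Dvd.intro _ h) with rfl | rfl <;> omega

namespace Residues

variable {p q : ℕ} (h : Residues p q)
include h

theorem ne : p ≠ q := by
  have := h.p_mod
  have := h.q_mod
  omega

theorem exists_pell_odd : ∃ u v : ℤ, u ^ 2 - p * v ^ 2 = 1 ∧ Odd v := by
  by_contra! heven
  obtain ⟨D₁, D₂, a, b, hD, hD2, hab⟩ := exists_mul_sq_eq_add_one h.prime_p.prime.not_isSquare
    fun u v huv => Int.not_odd_iff_even.1 (heven u v huv)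
  rcases (Nat.dvd_prime h.prime_p).1 (Dvd.intro_left _ hD) with rfl | rfl
  · exact hD2 rfl
  · obtain rfl : D₁ = 1 := Nat.eq_of_mul_eq_mul_right h.prime_p.pos (by simpa using hD)
    exact h.neg_one_p (by simpa using isSquare_neg_cast_of_dvd_right hab dvd_rfl)

theorem exists_sq_sub_mul_sq_eq_neg_two : ∃ x y : ℤ, x ^ 2 - p * y ^ 2 = -2 := by
  obtain ⟨u, v, huv, hv⟩ := h.exists_pell_odd
  have hodd : Odd p := Nat.odd_iff.2 (by have := h.p_mod; omega)
  obtain ⟨D₁, D₂, a, b, hD, hab⟩ := exists_mul_sq_eq_add_two hodd huv hv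
  rcases (Nat.dvd_prime h.prime_p).1 (Dvd.intro_left _ hD) with rfl | rfl
  · obtain rfl : D₁ = p := by simpa using hD
    have hcast := congrArg (Nat.cast : ℕ → ZMod D₁) hab
    push_cast [CharP.cast_eq_zero] at hcast
    exact absurd ⟨b, by linear_combination -hcast⟩ h.two_p
  · obtain rfl : D₁ = 1 := Nat.eq_of_mul_eq_mul_right h.prime_p.pos (by simpa using hD)
    refine ⟨a, b, ?_⟩
    zify at hab
    linear_combination -hab

theorem exists_two_mul_sq_sub_mul_sq_eq_one : ∃ x y : ℤ, 2 * x ^ 2 - q * y ^ 2 = 1 := by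
  have hq := h.prime_q
  obtain ⟨D₁, D₂, a, b, hD, hD2, hab⟩ :=
    exists_mul_sq_eq_add_one_of_mod_four (D := 2 * q) (by have := h.q_mod; omega)
  rcases hq.dvd_mul.1 (hD ▸ dvd_mul_left q 2) with hqD | hqD
  · obtain ⟨c, rfl⟩ := hqD
    have hc : c * D₂ = 2 := Nat.eq_of_mul_eq_mul_left hq.pos (by linarith)
    obtain ⟨rfl, rfl⟩ | ⟨-, rfl⟩ := eq_one_or_eq_two_of_mul_eq_two hc
    · refine ⟨b, a, ?_⟩
      zify at hab
      linear_combination hab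
    · exact absurd rfl hD2
  · have hsq := isSquare_neg_cast_of_dvd_right hab hqD
    obtain ⟨c, rfl⟩ := hqD
    have hc : D₁ * c = 2 := Nat.eq_of_mul_eq_mul_left hq.pos (by linarith)
    obtain ⟨rfl, -⟩ | ⟨rfl, -⟩ := eq_one_or_eq_two_of_mul_eq_two hc
    · exact absurd (by simpa using hsq) h.neg_one_q
    · exact absurd (by simpa using hsq) h.neg_two_q

/-- Of the factorizations `D₁ * D₂ = 2 * p * q`, residues modulo `p` and `q` leave only `D₂ = q`. -/
theorem exists_mul_sq_sub_two_mul_mul_sq_eq_one :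
    ∃ x y : ℤ, q * x ^ 2 - 2 * p * y ^ 2 = 1 := by
  have hq := h.prime_q
  have hp := h.prime_p
  have hcop : q.Coprime p := (Nat.coprime_primes hq hp).2 h.ne.symm
  have hpos : 0 < q * p := Nat.mul_pos hq.pos hp.pos
  have hmod : (p * q) % 8 = 5 := by rw [Nat.mul_mod, h.p_mod, h.q_mod]
  obtain ⟨D₁, D₂, a, b, hD, hD2, hab⟩ :=
    exists_mul_sq_eq_add_one_of_mod_four (D := 2 * (p * q)) (by omega)
  have hqD : q ∣ D₁ ∨ q ∣ D₂ := hq.dvd_mul.1 (hD ▸ ⟨2 * p, by ring⟩)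
  have hpD : p ∣ D₁ ∨ p ∣ D₂ := hp.dvd_mul.1 (hD ▸ ⟨2 * q, by ring⟩)
  rcases hqD with hqD | hqD <;> rcases hpD with hpD | hpD
  · have hsq := isSquare_cast_of_dvd_left hab hpD
    obtain ⟨c, rfl⟩ := hcop.mul_dvd_of_dvd_of_dvd hqD hpD
    have hc : c * D₂ = 2 := Nat.eq_of_mul_eq_mul_left hpos (by linarith)
    obtain ⟨-, rfl⟩ | ⟨-, rfl⟩ := eq_one_or_eq_two_of_mul_eq_two hc
    · exact absurd (by simpa using hsq) h.two_p
    · exact absurd rfl hD2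
  · have hsq := isSquare_cast_of_dvd_left hab hqD
    obtain ⟨⟨c, rfl⟩, d, rfl⟩ := And.intro hqD hpD
    have hc : c * d = 2 := Nat.eq_of_mul_eq_mul_left hpos (by linarith)
    obtain ⟨-, rfl⟩ | ⟨-, rfl⟩ := eq_one_or_eq_two_of_mul_eq_two hc
    · exact absurd (by simpa [mul_comm] using hsq) h.two_p_q
    · exact absurd (by simpa using hsq) h.p_q
  · have hsq := isSquare_cast_of_dvd_left hab hpD
    obtain ⟨⟨d, rfl⟩, c, rfl⟩ := And.intro hqD hpD
    have hc : c * d = 2 := Nat.eq_of_mul_eq_mul_left hpos (by linarith)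
    obtain ⟨-, rfl⟩ | ⟨rfl, rfl⟩ := eq_one_or_eq_two_of_mul_eq_two hc
    · exact absurd (by simpa [mul_comm] using hsq) h.two_q_p
    · refine ⟨b, a, ?_⟩
      zify at hab
      linear_combination hab
  · have hsq := isSquare_neg_cast_of_dvd_right hab hqD
    obtain ⟨c, rfl⟩ := hcop.mul_dvd_of_dvd_of_dvd hqD hpD
    have hc : D₁ * c = 2 := Nat.eq_of_mul_eq_mul_left hpos (by linarith)
    obtain ⟨rfl, -⟩ | ⟨rfl, -⟩ := eq_one_or_eq_two_of_mul_eq_two hc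
    · exact absurd (by simpa using hsq) h.neg_one_q
    · exact absurd (by simpa using hsq) h.neg_two_q

end Residues

theorem eq_zero_of_sq_add_four_mul_mul_sq_eq_four {d : ℕ} (hd1 : ¬ IsSquare d)
    (hd3 : ¬ IsSquare (3 * d)) {m : ℤ} {y : ℚ} (h : (m : ℚ) ^ 2 + 4 * d * y ^ 2 = 4) : y = 0 := by
  have isSquare_of_mul_self_eq {k : ℕ} {r : ℚ} (hr : r * r = k) : IsSquare k := by
    rw [← Rat.isSquare_natCast_iff]
    exact ⟨r, hr.symm⟩
  have hm : m ^ 2 ≤ 4 := by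
    have hnonneg : (0 : ℚ) ≤ 4 * d * y ^ 2 := by positivity
    have : (m : ℚ) ^ 2 ≤ 4 := by linarith
    exact_mod_cast this
  have hd : (d : ℚ) ≠ 0 := by
    rintro h0
    exact hd1 ⟨0, by simpa using h0⟩
  have of_sq_eq_four (hm4 : (m : ℚ) ^ 2 = 4) : y = 0 := by simpa [hm4, hd] using h
  have not_sq_eq_one (hm1 : (m : ℚ) ^ 2 = 1) : False :=
    hd3 (isSquare_of_mul_self_eq (r := 2 * d * y) (by
      push_cast; linear_combination d * h - d * hm1))
  have hle : m ≤ 2 := by nlinarith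
  have hge : -2 ≤ m := by nlinarith
  interval_cases m
  · exact of_sq_eq_four (by norm_num)
  · exact (not_sq_eq_one (by norm_num)).elim
  · refine (hd1 (isSquare_of_mul_self_eq (r := d * y) ?_)).elim
    push_cast at h
    linear_combination d * h / 4
  · exact (not_sq_eq_one (by norm_num)).elim
  · exact of_sq_eq_four (by norm_num)

theorem isPrincipalIdealRing_of_exists_sub_mul_lt {R : Type*} [CommRing R] {f : R → ℕ}
    (hf : ∀ x ≠ 0, ∀ y, ∃ c, f (y - x * c) < f x) : IsPrincipalIdealRing R := by
  refine ⟨fun I => ?_⟩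
  by_cases hI : I = ⊥
  · rw [hI]; infer_instance
  obtain ⟨x, ⟨hxI, hx0⟩, hmin⟩ := (measure f).wf.has_min {x | x ∈ I ∧ x ≠ 0}
    (Submodule.exists_mem_ne_zero_of_ne_bot hI)
  refine ⟨x, le_antisymm (fun y hy => ?_) ((Ideal.span_singleton_le_iff_mem I).2 hxI)⟩
  obtain ⟨c, hc⟩ := hf x hx0 y
  have hrem : y - x * c = 0 := by
    by_contra h0
    exact hmin _ ⟨sub_mem hy (I.mul_mem_right c hxI), h0⟩ hc
  exact Ideal.mem_span_singleton.2 ⟨c, sub_eq_zero.1 hrem⟩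

section Integers

variable {K : Type*} [Field K]

theorem exists_coe_eq_of_sq_eq {x : K} {n : ℤ} (hx : x ^ 2 = n) :
    ∃ w : 𝓞 K, (w : K) = x ∧ w ^ 2 = n := by
  have h : IsIntegral ℤ x := .of_pow two_pos (hx ▸ isIntegral_algebraMap)
  obtain ⟨w, rfl⟩ : ∃ w : 𝓞 K, (w : K) = x := ⟨⟨x, h⟩, rfl⟩
  exact ⟨w, rfl, RingOfIntegers.coe_injective (by simpa using hx)⟩

theorem exists_coe_eq_one_add_div_two [CharZero K] {r : K} {q : ℕ} (hr : r ^ 2 = -(q : K))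
    (hq : q % 4 = 3) : ∃ w : 𝓞 K, (w : K) = (1 + r) / 2 := by
  obtain ⟨k, hk⟩ : ∃ k : ℕ, q + 1 = 4 * k := ⟨(q + 1) / 4, by omega⟩
  have hk' : (q : K) = 4 * k - 1 := by rw [eq_sub_iff_add_eq]; exact_mod_cast hk
  have hω : IsIntegral ℤ ((1 + r) / 2) :=
    ⟨Polynomial.X ^ 2 - Polynomial.X + Polynomial.C (k : ℤ), by monicity!, by
      simp only [Polynomial.eval₂_add, Polynomial.eval₂_sub, Polynomial.eval₂_pow,
        Polynomial.eval₂_X, Polynomial.eval₂_C]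
      simp only [eq_intCast, Int.cast_natCast]
      linear_combination hr / 4 - hk' / 4⟩
  exact ⟨⟨_, hω⟩, rfl⟩

variable [NumberField K]

theorem sq_le_absNorm_of_not_isSquare {P : Ideal (𝓞 K)} (hP : P ≠ ⊤) {l : ℕ} (hl : l.Prime)
    (hlP : (l : 𝓞 K) ∈ P) {z : 𝓞 K} {n : ℤ} (hz : z ^ 2 = n) (hn : ¬ IsSquare (n : ZMod l)) :
    l ^ 2 ≤ Ideal.absNorm P := by
  have : Fact l.Prime := ⟨hl⟩
  have hP0 : P ≠ ⊥ := by
    rintro rfl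
    rw [Ideal.mem_bot] at hlP
    exact hl.ne_zero (by exact_mod_cast hlP)
  have : Finite (𝓞 K ⧸ P) := Ideal.finiteQuotientOfFreeOfNeBot P hP0
  have : Nontrivial (𝓞 K ⧸ P) := Ideal.Quotient.nontrivial_iff.2 hP
  have : CharP (𝓞 K ⧸ P) l := by
    refine (CharP.charP_iff_prime_eq_zero hl).2 ?_
    rw [← map_natCast (Ideal.Quotient.mk P), Ideal.Quotient.eq_zero_iff_mem]
    exact hlP
  let _ : Algebra (ZMod l) (𝓞 K ⧸ P) := ZMod.algebra _ l
  have hcard : Ideal.absNorm P = l ^ Module.finrank (ZMod l) (𝓞 K ⧸ P) := by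
    rw [Ideal.absNorm_apply, Submodule.cardQuot_apply,
      Module.natCard_eq_pow_finrank (K := ZMod l), Nat.card_zmod]
  rw [hcard]
  refine Nat.pow_le_pow_right hl.pos ?_
  have hpos : 0 < Module.finrank (ZMod l) (𝓞 K ⧸ P) := Module.finrank_pos
  by_contra hlt
  obtain ⟨c, hc⟩ := (Module.Free.bijective_algebraMap_of_finrank_eq_one
    (show Module.finrank (ZMod l) (𝓞 K ⧸ P) = 1 by omega)).2 (Ideal.Quotient.mk P z)
  refine hn ⟨c, (algebraMap (ZMod l) (𝓞 K ⧸ P)).injective ?_⟩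
  rw [map_mul, hc, ← map_mul, ← pow_two, hz]
  simp only [map_intCast]

theorem absNorm_span_singleton_eq_pow {x : 𝓞 K} {n d : ℕ} (hK : Module.finrank ℚ K = 2 * d)
    (hx : x ^ 2 = n ∨ x ^ 2 = -n) : Ideal.absNorm (Ideal.span {x}) = n ^ d := by
  have hsq : Ideal.span {x} ^ 2 = Ideal.span {(n : 𝓞 K)} := by
    rw [Ideal.span_singleton_pow]
    rcases hx with h | h
    · rw [h]
    · rw [h, Ideal.span_singleton_neg]
  have hnorm := congrArg Ideal.absNorm hsq
  rw [map_pow, Ideal.absNorm_span_natCast, RingOfIntegers.rank, hK, mul_comm, pow_mul] at hnorm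
  exact Nat.pow_left_injective two_ne_zero hnorm

end Integers

namespace IsQuadGen

section Imaginary

variable {A : Type*} [Field A] [NumberField A] {s : A} {σ : A ≃ₐ[ℚ] A} (h : IsQuadGen s σ)
include h

theorem exists_int_eq_two_mul (z : 𝓞 A) {x y : ℚ}
    (hz : (z : A) = algebraMap ℚ A x + algebraMap ℚ A y * s) :
    ∃ m : ℤ, (m : ℚ) = 2 * x := by
  have hint : IsIntegral ℤ ((z : A) + σ z) :=
    (RingOfIntegers.isIntegral_coe z).add (RingOfIntegers.isIntegral_coe (intAut σ z))
  have htrace : (z : A) + σ z = algebraMap ℚ A (2 * x) := by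
    rw [hz, h.map_add_mul, map_mul, map_ofNat]; ring
  rw [htrace, isIntegral_algebraMap_iff (algebraMap ℚ A).injective] at hint
  exact IsIntegrallyClosed.isIntegral_iff.1 hint

theorem norm_eq_absNorm {d : ℕ} (hd : s ^ 2 = -(d : A)) (z : 𝓞 A) :
    Algebra.norm ℚ (z : A) = Ideal.absNorm (Ideal.span {z}) := by
  obtain ⟨x, y, hxy⟩ := h.exists_eq z
  have hnonneg : 0 ≤ Algebra.norm ℚ (z : A) := by
    rw [hxy, h.norm_add_mul (d := -d) (by simp [hd]), neg_mul, sub_neg_eq_add]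
    positivity
  rw [← Algebra.coe_norm_int, Int.cast_nonneg_iff] at hnonneg
  rw [Ideal.absNorm_span_singleton, ← Algebra.coe_norm_int, ← Int.cast_natCast,
    Int.natAbs_of_nonneg hnonneg]

theorem unit_eq_one_or_eq_neg_one {d : ℕ} (hd : s ^ 2 = -(d : A)) (hd1 : ¬ IsSquare d)
    (hd3 : ¬ IsSquare (3 * d)) (u : (𝓞 A)ˣ) : u = 1 ∨ u = -1 := by
  obtain ⟨x, y, hxy⟩ := h.exists_eq (u : 𝓞 A)
  obtain ⟨m, hm⟩ := h.exists_int_eq_two_mul u hxy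
  have hnorm : x ^ 2 + d * y ^ 2 = 1 := by
    have hone := h.norm_eq_absNorm hd u
    rw [hxy, h.norm_add_mul (d := -d) (by simp [hd]), Ideal.span_singleton_eq_top.2 u.isUnit,
      Ideal.absNorm_top] at hone
    simpa using hone
  obtain rfl : y = 0 := eq_zero_of_sq_add_four_mul_mul_sq_eq_four hd1 hd3 (m := m) (by
    rw [hm]; linear_combination 4 * hnorm)
  have hx : x = 1 ∨ x = -1 := sq_eq_one_iff.1 (by simpa using hnorm)
  refine hx.imp (fun hx => ?_) (fun hx => ?_) <;>
    exact Units.ext (RingOfIntegers.ext (by simpa [hx] using hxy))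

theorem exists_absNorm_span_sub_mul_lt (hs : s ^ 2 = -2) {x : 𝓞 A} (hx : x ≠ 0) (y : 𝓞 A) :
    ∃ c, Ideal.absNorm (Ideal.span {y - x * c}) < Ideal.absNorm (Ideal.span {x}) := by
  obtain ⟨a, b, hab⟩ := h.exists_eq ((y : A) / x)
  obtain ⟨s', hs', -⟩ := exists_coe_eq_of_sq_eq (x := s) (n := -2) (by simp [hs])
  refine ⟨round a + round b * s', ?_⟩
  have hxA : (x : A) ≠ 0 := by simpa using hx
  have hrem : ((y - x * (round a + round b * s') : 𝓞 A) : A) =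
      x * (algebraMap ℚ A (a - round a) + algebraMap ℚ A (b - round b) * s) := by
    simp only [map_sub, map_mul, map_add, map_intCast, hs']
    rw [div_eq_iff hxA] at hab
    linear_combination hab
  have hd : s ^ 2 = -((2 : ℕ) : A) := by simp [hs]
  have hpos : (0 : ℚ) < Ideal.absNorm (Ideal.span {x}) := by
    rw [Nat.cast_pos, Nat.pos_iff_ne_zero, Ne, Ideal.absNorm_eq_zero_iff,
      Ideal.span_singleton_eq_bot]
    exact hx
  have round_sq (z : ℚ) : (z - round z) ^ 2 ≤ 1 / 4 := by
    have := abs_le.1 (abs_sub_round z)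
    nlinarith
  rw [← Nat.cast_lt (α := ℚ), ← h.norm_eq_absNorm hd (y - _), hrem, map_mul,
    h.norm_add_mul (d := -2) (by simp [hs]), h.norm_eq_absNorm hd x]
  exact mul_lt_of_lt_one_right hpos (by linarith [round_sq a, round_sq b])

theorem isPrincipalIdealRing_of_sq_eq_neg_two (hs : s ^ 2 = -2) : IsPrincipalIdealRing (𝓞 A) :=
  isPrincipalIdealRing_of_exists_sub_mul_lt (f := fun x => Ideal.absNorm (Ideal.span {x}))
    fun _ hx => h.exists_absNorm_span_sub_mul_lt hs hx

end Imaginary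

end IsQuadGen

section Sylow

variable {G : Type*} [CommGroup G]

theorem mem_sylow_two_iff_sq_eq_one (h : ∀ c : G, (c ^ 2) ^ 2 = 1 → c ^ 2 = 1) (P : Sylow 2 G)
    {c : G} : c ∈ P ↔ c ^ 2 = 1 := by
  constructor
  · intro hc
    obtain ⟨k, hk⟩ := P.isPGroup' ⟨c, hc⟩
    replace hk : c ^ 2 ^ k = 1 := congrArg Subtype.val hk
    clear hc
    induction k with
    | zero => rw [pow_zero, pow_one] at hk; rw [hk, one_pow]
    | succ k ih =>
      rcases k with _ | k
      · simpa using hk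
      · have hsq := h (c ^ 2 ^ k) (by simpa only [pow_succ, pow_mul] using hk)
        exact ih (by rwa [← pow_mul, ← pow_succ] at hsq)
  · intro hc
    have hp : IsPGroup 2 (Subgroup.zpowers c) := by
      rintro ⟨_, k, rfl⟩
      refine ⟨1, Subtype.ext ?_⟩
      rw [pow_one, Subgroup.coe_pow, Subgroup.coe_one, ← zpow_natCast, ← zpow_mul,
        mul_comm, zpow_mul, zpow_natCast, hc, one_zpow]
    exact hp.le_sylow_of_normal P (Subgroup.mem_zpowers c)

theorem isKleinFour_of_coe_eq {H : Subgroup G} {a b : G} (ha : a ^ 2 = 1) (hb : b ^ 2 = 1)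
    (ha1 : a ≠ 1) (hb1 : b ≠ 1) (hab1 : a * b ≠ 1) (hH : (H : Set G) = {1, a, b, a * b}) :
    IsKleinFour H := by
  have hab : a ≠ b := fun h => hab1 (by rw [← h, ← pow_two, ha])
  have sq_eq_one (c : H) : c ^ 2 = 1 := by
    have hc : (c : G) ∈ ({1, a, b, a * b} : Set G) := hH ▸ c.2
    simp only [Set.mem_insert_iff, Set.mem_singleton_iff] at hc
    refine Subtype.ext ?_
    rcases hc with h | h | h | h <;> simp [h, ha, hb, mul_pow]
  have haH : a ∈ H := by rw [← SetLike.mem_coe, hH]; simp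
  constructor
  · rw [← SetLike.coe_sort_coe, hH, Nat.card_coe_set_eq, Set.ncard_insert_of_notMem,
      Set.ncard_insert_of_notMem, Set.ncard_pair]
    · simpa using ha1
    · simp [hab, hb1]
    · simp [ha1.symm, hb1.symm, hab1.symm]
  · refine ((Nat.dvd_prime Nat.prime_two).1
      (Monoid.exponent_dvd_of_forall_pow_eq_one sq_eq_one)).resolve_left fun hexp => ?_
    rw [Monoid.exp_eq_one_iff] at hexp
    exact ha1 (congrArg Subtype.val (hexp.elim (⟨a, haH⟩ : H) 1))

theorem nonempty_sylow_two_mulEquiv {a b : G} (ha : a ^ 2 = 1) (hb : b ^ 2 = 1)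
    (htor : ∀ c : G, c ^ 2 = 1 → c = 1 ∨ c = a ∨ c = b ∨ c = a * b)
    (hna : ∀ c : G, c ^ 2 ≠ a) (hnb : ∀ c : G, c ^ 2 ≠ b) (hnab : ∀ c : G, c ^ 2 ≠ a * b)
    (P : Sylow 2 G) :
    Nonempty (↥(P : Subgroup G) ≃* Multiplicative (ZMod 2 × ZMod 2)) := by
  have hmem (c : G) : c ∈ P ↔ c ^ 2 = 1 := mem_sylow_two_iff_sq_eq_one (fun c hc => by
    rcases htor _ hc with h | h | h | h
    · exact h
    · exact absurd h (hna c)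
    · exact absurd h (hnb c)
    · exact absurd h (hnab c)) P
  have hP : ((P : Subgroup G) : Set G) = {1, a, b, a * b} := by
    ext c
    refine ⟨fun hc => htor c ((hmem c).1 hc), fun hc => (hmem c).2 ?_⟩
    rcases hc with rfl | rfl | rfl | rfl <;> simp [ha, hb, mul_pow]
  have := isKleinFour_of_coe_eq ha hb (fun h => hna 1 (by rw [h, one_pow]))
    (fun h => hnb 1 (by rw [h, one_pow])) (fun h => hnab 1 (by rw [h, one_pow])) hP
  exact IsKleinFour.nonempty_mulEquiv

end Sylow

theorem exists_eq_span_singleton_of_span_mul_eq {R : Type*} [CommRing R] [IsDomain R]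
    {I : Ideal R} {b z : R} (hb : b ≠ 0) (h : Ideal.span {b} * I = Ideal.span {z}) :
    ∃ c, z = b * c ∧ I = Ideal.span {c} := by
  have hz : z ∈ Ideal.span {b} := by
    refine Ideal.mul_le_left (J := I) ?_
    rw [h]
    exact Ideal.mem_span_singleton_self z
  obtain ⟨c, rfl⟩ := Ideal.mem_span_singleton.1 hz
  refine ⟨c, rfl, (Ideal.span_singleton_mul_right_inj hb).1 ?_⟩
  rw [h, Ideal.span_singleton_mul_span_singleton]

namespace IsQuadGen

section Bottom

variable {A M : Type*} [Field A] [NumberField A] [Field M] [NumberField M] [Algebra A M]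
  {s : A} {ρ : A ≃ₐ[ℚ] A} (hA : IsQuadGen s ρ) (hs : s ^ 2 = -2)
  {r : M} {τ : M ≃ₐ[A] M} (hM : IsQuadGen r τ) {p q : ℕ} (hr : r ^ 2 = -(q : M))
  (hpq : Residues p q)

include hA hM in
theorem finrank_rat_eq_four : Module.finrank ℚ M = 4 := by
  have := hA.isQuadraticExtension
  have := hM.isQuadraticExtension
  have htower := Module.finrank_mul_finrank ℚ A M
  rw [Algebra.IsQuadraticExtension.finrank_eq_two, Algebra.IsQuadraticExtension.finrank_eq_two]
    at htower
  exact htower.symm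

include hA hs hM hr hpq in
theorem eq_span_singleton_of_sub_intAut_mem {P : Ideal (𝓞 M)} (hP : P ≠ ⊤)
    (hram : ∀ x, x - intAut τ x ∈ P) {w : 𝓞 M} (hw : (w : M) = r) : P = Ideal.span {w} := by
  obtain ⟨ω, hω⟩ := exists_coe_eq_one_add_div_two hr (by have := hpq.q_mod; omega)
  have hwsq : w ^ 2 = -(q : 𝓞 M) := RingOfIntegers.coe_injective (by simpa [hw] using hr)
  have hwP : w ∈ P := by
    convert hram ω
    apply RingOfIntegers.coe_injective
    simp only [map_sub, coe_intAut, hω, hw, map_div₀, map_add, map_one, hM.map_eq_neg, map_ofNat]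
    ring
  have hqP : (q : 𝓞 M) ∈ P := by
    rw [← neg_mem_iff, ← hwsq]
    exact P.pow_mem_of_mem hwP 2 two_pos
  obtain ⟨s', -, hs'⟩ := exists_coe_eq_of_sq_eq (x := algebraMap A M s) (n := -2)
    (by rw [← map_pow, hs, map_neg, map_ofNat]; simp)
  have hle := sq_le_absNorm_of_not_isSquare hP hpq.prime_q hqP hs' (by simpa using hpq.neg_two_q)
  have hnorm := absNorm_span_singleton_eq_pow (d := 2) (hA.finrank_rat_eq_four hM) (.inr hwsq)
  have hw0 : w ≠ 0 := by
    rintro rfl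
    exact hM.neg_ne (by simp [← hw])
  exact (ideal_eq_of_le_of_absNorm_le (by simpa using hw0)
    ((Ideal.span_singleton_le_iff_mem P).2 hwP) (hnorm.trans_le hle)).symm

include hA hs hM hr hpq in
theorem exists_eq_span_singleton_of_map_eq {I : Ideal (𝓞 M)} (hI : I ≠ ⊥)
    (hτ : I.map (intAut τ) = I) :
    ∃ z, I = Ideal.span {z} ∧ (intAut τ z = z ∨ intAut τ z = -z) := by
  let S : Submonoid (Ideal (𝓞 M)) :=
    { carrier := {I | ∃ z, I = Ideal.span {z} ∧ (intAut τ z = z ∨ intAut τ z = -z)}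
      one_mem' := ⟨1, by simp, by simp⟩
      mul_mem' := by
        rintro _ _ ⟨z, rfl, hz⟩ ⟨w, rfl, hw⟩
        refine ⟨z * w, Ideal.span_singleton_mul_span_singleton z w, ?_⟩
        rcases hz with hz | hz <;> rcases hw with hw | hw <;> simp [hz, hw] }
  refine hM.mem_of_map_eq (S := S) (fun J _ => ?_) (fun P hP _ _ hram => ?_) hI hτ
  · have := hA.isPrincipalIdealRing_of_sq_eq_neg_two hs
    obtain ⟨j, rfl⟩ := IsPrincipalIdealRing.principal J
    rw [Ideal.submodule_span_eq, Ideal.map_span, Set.image_singleton]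
    exact ⟨_, rfl, .inl ((intAut τ).commutes j)⟩
  · obtain ⟨w, hw, -⟩ := exists_coe_eq_of_sq_eq (x := r) (n := -q) (by simp [hr])
    refine ⟨w, hA.eq_span_singleton_of_sub_intAut_mem hs hM hr hpq hP.ne_top hram hw, .inr ?_⟩
    apply RingOfIntegers.coe_injective
    simp only [coe_intAut, hw, hM.map_eq_neg, map_neg]

include hA hs hM hr hpq in
theorem exists_unit_norm_eq (u : (𝓞 A)ˣ) :
    ∃ e : (𝓞 M)ˣ, Algebra.norm A ((e : 𝓞 M) : M) = (u : 𝓞 A) := by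
  rcases hA.unit_eq_one_or_eq_neg_one (d := 2) (by simpa using hs)
    Nat.prime_two.prime.not_isSquare (by decide +kernel) u with rfl | rfl
  · exact ⟨1, by simp⟩
  · obtain ⟨x, y, hxy⟩ := hpq.exists_two_mul_sq_sub_mul_sq_eq_one
    have hxyM : 2 * (x : M) ^ 2 - q * (y : M) ^ 2 = 1 := by exact_mod_cast hxy
    have hsM : (algebraMap A M s) ^ 2 = -2 := by rw [← map_pow, hs, map_neg, map_ofNat]
    obtain ⟨r', hr', -⟩ := exists_coe_eq_of_sq_eq (x := r) (n := -q) (by simp [hr])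
    obtain ⟨s', hs', -⟩ := exists_coe_eq_of_sq_eq (n := -2) (by simpa using hsM)
    have hinv : ((x : 𝓞 M) * s' + y * r') * -(x * s' - y * r') = 1 := by
      apply RingOfIntegers.coe_injective
      simp only [map_mul, map_neg, map_sub, map_add, hs', hr', map_intCast, map_one]
      linear_combination hxyM - x ^ 2 * hsM + y ^ 2 * hr
    refine ⟨.mkOfMulEqOne _ _ hinv, (algebraMap A M).injective ?_⟩
    simp only [hM.algebraMap_norm, map_mul, map_add, hs', hr', map_intCast, hM.map_eq_neg,
      τ.commutes, Units.val_mkOfMulEqOne, Units.val_neg, Units.val_one, map_neg, map_one]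
    linear_combination -hxyM + x ^ 2 * hsM - y ^ 2 * hr

include hA hs hM hr hpq in
theorem isPrincipal_of_isPrincipal_sq {I : Ideal (𝓞 M)} (h : (I ^ 2).IsPrincipal) :
    I.IsPrincipal := by
  by_cases hI : I = ⊥
  · rw [hI]; infer_instance
  have := hA.isPrincipalIdealRing_of_sq_eq_neg_two hs
  obtain ⟨b, hb, hbI⟩ := hM.exists_map_span_mul_eq
    (fun u _ _ => hA.exists_unit_norm_eq hs hM hr hpq u)
    (fun J _ => IsPrincipalIdealRing.principal J) hI h
  obtain ⟨z, hz, -⟩ := hA.exists_eq_span_singleton_of_map_eq hs hM hr hpq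
    (mul_ne_zero (by simpa using hb) hI) hbI
  obtain ⟨c, -, hc⟩ := exists_eq_span_singleton_of_span_mul_eq hb hz
  exact ⟨c, hc⟩

include hA hs hM hr hpq in
theorem odd_card_classGroup : Odd (Nat.card (ClassGroup (𝓞 M))) := by
  rw [← Nat.not_even_iff_odd, even_iff_two_dvd]
  intro hdvd
  have : Fact (Nat.Prime 2) := ⟨Nat.prime_two⟩
  obtain ⟨c, hc⟩ := exists_prime_orderOf_dvd_card' 2 hdvd
  obtain ⟨I, rfl⟩ := ClassGroup.mk0_surjective c
  have hsq := pow_orderOf_eq_one (ClassGroup.mk0 I)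
  rw [hc, ← map_pow, ClassGroup.mk0_eq_one_iff] at hsq
  have hI := hA.isPrincipal_of_isPrincipal_sq hs hM hr hpq (I := I) hsq
  rw [(ClassGroup.mk0_eq_one_iff I.2).2 hI, orderOf_one] at hc
  omega

end Bottom

end IsQuadGen

theorem IsQuadGen.nonempty_ringHom {F E : Type*} [Field F] [NumberField F] [Field E] [CharZero E]
    {s : F} {σ : F ≃ₐ[ℚ] F} (h : IsQuadGen s σ) {n : ℤ} (hs : s ^ 2 = n) {c : E}
    (hc : c ^ 2 = n) : Nonempty (F →+* E) := by
  have htop : adjoin ℚ {s} = ⊤ := by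
    rw [eq_top_iff]
    rintro z -
    obtain ⟨x, y, rfl⟩ := h.exists_eq z
    exact add_mem (IntermediateField.algebraMap_mem _ x)
      (mul_mem (IntermediateField.algebraMap_mem _ y) (mem_adjoin_simple_self ℚ s))
  have hdvd : minpoly ℚ s ∣ Polynomial.X ^ 2 - Polynomial.C (n : ℚ) :=
    minpoly.dvd _ _ (by simp [hs])
  have hfactor : (Polynomial.X ^ 2 - Polynomial.C (n : ℚ)).map (algebraMap ℚ E) =
      (Polynomial.X - Polynomial.C c) * (Polynomial.X - Polynomial.C (-c)) := by
    rw [Polynomial.map_sub, Polynomial.map_pow, Polynomial.map_X, Polynomial.map_C,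
      map_intCast, ← hc, map_neg, map_pow]
    ring
  have hsplit : ((minpoly ℚ s).map (algebraMap ℚ E)).Splits := by
    refine .of_dvd ?_ ?_ (Polynomial.map_dvd (algebraMap ℚ E) hdvd) <;> rw [hfactor]
    · exact (Polynomial.Splits.X_sub_C c).mul (Polynomial.Splits.X_sub_C (-c))
    · exact mul_ne_zero (Polynomial.X_sub_C_ne_zero _) (Polynomial.X_sub_C_ne_zero _)
  obtain ⟨f⟩ := nonempty_algHom_of_adjoin_splits (F := ℚ) (E := F) (K := E) (S := {s})
    (by rintro _ rfl; exact ⟨Algebra.IsIntegral.isIntegral _, hsplit⟩) htop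
  exact ⟨f.toRingHom⟩

section Padic

variable {p : ℕ} [Fact p.Prime]

theorem exists_padic_sq_eq_of_norm_lt {n a : ℤ}
    (h : ‖((a ^ 2 - n : ℤ) : ℤ_[p])‖ < ‖((2 * a : ℤ) : ℤ_[p])‖ ^ 2) :
    ∃ c : ℚ_[p], c ^ 2 = n := by
  obtain ⟨z, hz, -⟩ := hensels_lemma (p := p) (F := (Polynomial.X ^ 2 - Polynomial.C (n : ℤ_[p])))
    (a := (a : ℤ_[p])) (by simpa [one_add_one_eq_two] using h)
  have hsq : z ^ 2 = n := by simpa [sub_eq_zero] using hz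
  exact ⟨z, by exact_mod_cast congrArg (fun w : ℤ_[p] => (w : ℚ_[p])) hsq⟩

theorem exists_padic_sq_eq_of_isSquare (hp : p ≠ 2) {n : ℤ} (hn : (n : ZMod p) ≠ 0)
    (h : IsSquare (n : ZMod p)) : ∃ c : ℚ_[p], c ^ 2 = n := by
  obtain ⟨b, hb⟩ := h
  obtain ⟨a, rfl⟩ := ZMod.intCast_surjective b
  have hroot : ‖((a ^ 2 - n : ℤ) : ℤ_[p])‖ < 1 := by
    rw [PadicInt.norm_int_lt_one_iff_dvd, ← ZMod.intCast_zmod_eq_zero_iff_dvd]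
    push_cast
    rw [hb]; ring
  have hderiv : ‖((2 * a : ℤ) : ℤ_[p])‖ = 1 := by
    refine le_antisymm (PadicInt.norm_le_one _) (not_lt.1 fun hlt => ?_)
    rw [PadicInt.norm_int_lt_one_iff_dvd, ← ZMod.intCast_zmod_eq_zero_iff_dvd] at hlt
    push_cast at hlt
    rcases mul_eq_zero.1 hlt with h0 | h0
    · have h2 : ((2 : ℕ) : ZMod p) = 0 := by exact_mod_cast h0
      rw [ZMod.natCast_eq_zero_iff] at h2
      exact hp ((Nat.prime_dvd_prime_iff_eq Fact.out Nat.prime_two).1 h2)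
    · exact hn (by rw [hb, h0, zero_mul])
  exact exists_padic_sq_eq_of_norm_lt (by rwa [hderiv, one_pow])

theorem exists_padic_two_sq_eq_of_mod_eight {n : ℤ} (h : n % 8 = 1) :
    ∃ c : ℚ_[2], c ^ 2 = n := by
  have hroot : ‖((1 ^ 2 - n : ℤ) : ℤ_[2])‖ ≤ 2 ^ (-3 : ℤ) := by
    have hdvd : ((2 ^ 3 : ℕ) : ℤ) ∣ 1 ^ 2 - n := by norm_num; omega
    exact_mod_cast (PadicInt.norm_int_le_pow_iff_dvd (p := 2) (k := 1 ^ 2 - n) (n := 3)).2 hdvd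
  have hderiv : ‖((2 * 1 : ℤ) : ℤ_[2])‖ = 2⁻¹ := by
    simpa using PadicInt.norm_p (p := 2)
  refine exists_padic_sq_eq_of_norm_lt (a := 1) ?_
  rw [hderiv]
  exact hroot.trans_lt (by norm_num)

theorem exists_primitive_padicInt {ι : Type*} [Finite ι] {v : ι → ℚ_[p]} (hv : v ≠ 0) :
    ∃ c ≠ 0, ∃ w : ι → ℤ_[p], (∀ i, v i = c * w i) ∧ ∃ i, IsUnit (w i) := by
  obtain ⟨j, hj⟩ := Function.ne_iff.1 hv
  have : Nonempty ι := ⟨j⟩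
  obtain ⟨i, hi⟩ := Finite.exists_max fun i => ‖v i‖
  have hi0 : v i ≠ 0 := norm_pos_iff.1 ((norm_pos_iff.2 hj).trans_le (hi j))
  let w (k : ι) : ℤ_[p] :=
    ⟨v k / v i, by rw [norm_div]; exact div_le_one_of_le₀ (hi k) (norm_nonneg _)⟩
  have hwi : w i = 1 := PadicInt.ext (div_self hi0)
  exact ⟨v i, hi0, w, fun k => (mul_div_cancel₀ _ hi0).symm, i, hwi ▸ isUnit_one⟩

theorem exists_primitive_padicInt_of_diagonal {a b c : ℤ} {x y z : ℚ_[p]}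
    (h : a * x ^ 2 + b * y ^ 2 + c * z ^ 2 = 0) (hne : x ≠ 0 ∨ y ≠ 0 ∨ z ≠ 0) :
    ∃ x y z : ℤ_[p], a * x ^ 2 + b * y ^ 2 + c * z ^ 2 = 0 ∧
      (IsUnit x ∨ IsUnit y ∨ IsUnit z) := by
  obtain ⟨d, hd, w, hw, hu⟩ := exists_primitive_padicInt (v := ![x, y, z])
    (fun h0 => by simp_all)
  obtain ⟨rfl, rfl, rfl⟩ : x = d * w 0 ∧ y = d * w 1 ∧ z = d * w 2 := ⟨hw 0, hw 1, hw 2⟩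
  refine ⟨w 0, w 1, w 2, PadicInt.ext (mul_left_cancel₀ (pow_ne_zero 2 hd) ?_), by
    simpa [Fin.exists_fin_succ] using hu⟩
  push_cast
  linear_combination h

theorem padic_eq_zero_of_sq_sub_mul_sq_eq {n : ℤ} (hn : ¬ IsSquare (n : ZMod p)) {x y z : ℚ_[p]}
    (h : x ^ 2 - n * z ^ 2 = p * y ^ 2) : z = 0 := by
  by_contra hz
  obtain ⟨x, z, y, heq, hu⟩ := exists_primitive_padicInt_of_diagonal (a := 1) (b := -n) (c := -p)
    (x := x) (y := z) (z := y) (by push_cast; linear_combination h) (.inr (.inl hz))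
  push_cast at heq
  have hdvd (w : ℤ_[p]) : (p : ℤ_[p]) ∣ w ↔ PadicInt.toZMod w = 0 := by
    rw [← RingHom.mem_ker, PadicInt.ker_toZMod, PadicInt.maximalIdeal_eq_span_p,
      Ideal.mem_span_singleton]
  have hmod := congrArg PadicInt.toZMod heq
  simp only [map_add, map_neg, map_mul, map_pow, map_intCast, map_natCast, CharP.cast_eq_zero,
    neg_zero, zero_mul, add_zero, map_zero, one_mul] at hmod
  have hz0 : PadicInt.toZMod z = 0 := by
    by_contra h0
    refine hn ⟨PadicInt.toZMod x / PadicInt.toZMod z, ?_⟩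
    field_simp
    linear_combination -hmod
  have hx0 : PadicInt.toZMod x = 0 := by simpa [hz0] using hmod
  obtain ⟨x', rfl⟩ := (hdvd x).2 hx0
  obtain ⟨z', rfl⟩ := (hdvd z).2 hz0
  have hp0 : (p : ℤ_[p]) ≠ 0 := by exact_mod_cast (Fact.out : p.Prime).ne_zero
  have hy : y ^ 2 = p * (x' ^ 2 - n * z' ^ 2) :=
    mul_left_cancel₀ hp0 (by linear_combination -heq)
  obtain ⟨y', rfl⟩ := PadicInt.prime_p.dvd_of_dvd_pow ⟨_, hy⟩
  have hpu : ¬ IsUnit (p : ℤ_[p]) := PadicInt.prime_p.not_isUnit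
  rcases hu with h | h | h <;> exact hpu (isUnit_of_mul_isUnit_left h)

end Padic

theorem exists_primitive_mod_eight_of_diagonal {a b c : ℤ} {x y z : ℚ_[2]}
    (h : a * x ^ 2 + b * y ^ 2 + c * z ^ 2 = 0) (hne : x ≠ 0 ∨ y ≠ 0 ∨ z ≠ 0) :
    ∃ x y z : ZMod 8, a * x ^ 2 + b * y ^ 2 + c * z ^ 2 = 0 ∧
      (IsUnit x ∨ IsUnit y ∨ IsUnit z) := by
  obtain ⟨x, y, z, heq, hu⟩ := exists_primitive_padicInt_of_diagonal h hne
  let f : ℤ_[2] →+* ZMod 8 := PadicInt.toZModPow 3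
  refine ⟨f x, f y, f z, ?_, hu.imp (·.map f) (Or.imp (·.map f) (·.map f))⟩
  simpa only [map_add, map_mul, map_pow, map_intCast, map_zero] using congrArg f heq

theorem padic_two_sq_add_two_mul_sq_ne_neg {p : ℕ} (hp : p % 8 = 3) (x y : ℚ_[2]) :
    x ^ 2 + 2 * y ^ 2 ≠ -p := by
  intro h
  obtain ⟨x, y, z, h, hu⟩ := exists_primitive_mod_eight_of_diagonal (x := x) (y := y) (z := 1)
    (a := 1) (b := 2) (c := p) (by push_cast; linear_combination h) (by simp)
  have hp8 : (p : ZMod 8) = 3 := by rw [← ZMod.natCast_mod, hp]; rfl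
  push_cast at h
  rw [hp8] at h
  revert x y z
  decide

theorem padic_two_sq_ne_mul_one_add_sq {p : ℕ} (hp : p % 8 = 3) (z w : ℚ_[2]) :
    z ^ 2 ≠ p * (1 + w ^ 2) := by
  intro h
  obtain ⟨x, y, z, h, hu⟩ := exists_primitive_mod_eight_of_diagonal (x := 1) (y := w) (z := z)
    (a := p) (b := p) (c := -1) (by push_cast; linear_combination -h) (by simp)
  have hp8 : (p : ZMod 8) = 3 := by rw [← ZMod.natCast_mod, hp]; rfl
  push_cast at h
  rw [hp8] at h
  revert x y z
  decide

section Tower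

variable {A B M K : Type*} [Field A] [Field B] [Field M] [Field K] [NumberField A] [NumberField B]
  [Algebra A M] [Algebra B M] [Algebra M K]

/-- The subfields `A = ℚ(√-2)`, `B = ℚ(√-q)` and `M = AB` of `K = M(√p)`, with integral
generators and Galois involutions; `ω = (1 + √-q) / 2`. -/
structure Tower (p q : ℕ) (a : 𝓞 A) (b : 𝓞 B) (ω : 𝓞 M) (s : 𝓞 K) (ρ : A ≃ₐ[ℚ] A)
    (β : B ≃ₐ[ℚ] B) (κ : M ≃ₐ[B] M) (τ : M ≃ₐ[A] M) (σ : K ≃ₐ[M] K) : Prop where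
  residues : Residues p q
  a_sq : a ^ 2 = -2
  b_sq : b ^ 2 = -(q : 𝓞 B)
  s_sq : s ^ 2 = (p : 𝓞 K)
  two_mul_ω : 2 * ω = 1 + algebraMap (𝓞 B) (𝓞 M) b
  isQuadGen_ρ : IsQuadGen (a : A) ρ
  isQuadGen_β : IsQuadGen (b : B) β
  isQuadGen_κ : IsQuadGen (algebraMap A M a) κ
  isQuadGen_τ : IsQuadGen (algebraMap B M b) τ
  isQuadGen_σ : IsQuadGen (s : K) σ

namespace Tower

variable {p q : ℕ} {a : 𝓞 A} {b : 𝓞 B} {ω : 𝓞 M} {s : 𝓞 K} {ρ : A ≃ₐ[ℚ] A}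
    {β : B ≃ₐ[ℚ] B} {κ : M ≃ₐ[B] M} {τ : M ≃ₐ[A] M} {σ : K ≃ₐ[M] K}
    (t : Tower p q a b ω s ρ β κ τ σ)

include t

theorem coe_a_sq : (a : A) ^ 2 = -2 := by
  simpa only [map_pow, map_neg, map_ofNat] using congrArg (algebraMap (𝓞 A) A) t.a_sq

theorem coe_b_sq : (algebraMap B M b) ^ 2 = -(q : M) := by
  simpa only [map_pow, map_neg, map_natCast] using
    congrArg (fun z : 𝓞 B => algebraMap B M z) t.b_sq

theorem coe_s_sq : (s : K) ^ 2 = p := by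
  simpa only [map_pow, map_natCast] using congrArg (algebraMap (𝓞 K) K) t.s_sq

theorem intAut_s : intAut σ s = -s :=
  RingOfIntegers.coe_injective (by simp only [coe_intAut, t.isQuadGen_σ.map_eq_neg, map_neg])

theorem p_ne_two : p ≠ 2 := by
  have := t.residues.p_mod
  omega

theorem s_notMem_range_A [Algebra A K] [IsScalarTower A M K] :
    (s : K) ∉ (algebraMap A K).range := by
  rintro ⟨x, hx⟩
  exact t.isQuadGen_σ.notMem_range
    ⟨algebraMap A M x, by rw [← hx, IsScalarTower.algebraMap_apply A M K]⟩

theorem s_notMem_range_B [Algebra B K] [IsScalarTower B M K] :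
    (s : K) ∉ (algebraMap B K).range := by
  rintro ⟨x, hx⟩
  exact t.isQuadGen_σ.notMem_range
    ⟨algebraMap B M x, by rw [← hx, IsScalarTower.algebraMap_apply B M K]⟩

theorem nonempty_ringHom_padic [Fact p.Prime] : Nonempty (A →+* ℚ_[p]) := by
  have htwo : ((-2 : ℤ) : ZMod p) ≠ 0 := by
    intro h0
    rw [Int.cast_neg, neg_eq_zero, Int.cast_ofNat, ← Nat.cast_ofNat (R := ZMod p),
      ZMod.natCast_eq_zero_iff] at h0
    exact t.p_ne_two ((Nat.prime_dvd_prime_iff_eq Fact.out Nat.prime_two).1 h0)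
  obtain ⟨c, hc⟩ := exists_padic_sq_eq_of_isSquare t.p_ne_two htwo
    (by simpa using t.residues.neg_two_p)
  exact t.isQuadGen_ρ.nonempty_ringHom (n := -2) (by simpa using t.coe_a_sq) hc

theorem norm_ne_neg_one [NumberField K] [Algebra A K] [IsScalarTower A M K] (z : K) :
    Algebra.norm A z ≠ -1 := by
  intro hnorm
  obtain ⟨x, y, hxy⟩ := exists_norm_eq_sq_sub_mul_sq (F := A) (d := (p : A))
    (by rw [map_natCast, t.coe_s_sq]) t.s_notMem_range_A z
  have : Fact p.Prime := ⟨t.residues.prime_p⟩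
  obtain ⟨f⟩ := t.nonempty_ringHom_padic
  have hf := congrArg f (hnorm.symm.trans hxy)
  simp only [map_neg, map_one, map_sub, map_mul, map_pow, map_natCast] at hf
  refine one_ne_zero (padic_eq_zero_of_sq_sub_mul_sq_eq (p := p) (n := -1) (x := f x) (y := f y)
    (z := 1) (by simpa using t.residues.neg_one_p) ?_)
  push_cast
  linear_combination -hf

variable [NumberField M]

theorem odd_card_classGroup : Odd (Nat.card (ClassGroup (𝓞 M))) :=
  t.isQuadGen_ρ.odd_card_classGroup t.coe_a_sq t.isQuadGen_τ t.coe_b_sq t.residues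

theorem mul_intAut_unit_eq (u : (𝓞 M)ˣ) :
    (u : 𝓞 M) * intAut τ u = 1 ∨ (u : 𝓞 M) * intAut τ u = -1 := by
  have hu : algebraMap (𝓞 A) (𝓞 M) (Units.map (Algebra.intNorm (𝓞 A) (𝓞 M)) u : (𝓞 A)ˣ) =
      u * intAut τ u := t.isQuadGen_τ.algebraMap_intNorm u
  rw [← hu]
  refine (t.isQuadGen_ρ.unit_eq_one_or_eq_neg_one (d := 2) (by simpa using t.coe_a_sq)
    Nat.prime_two.prime.not_isSquare (by decide +kernel)
    (Units.map (Algebra.intNorm (𝓞 A) (𝓞 M)) u)).imp (fun h => ?_) (fun h => ?_) <;> simp [h]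

/-- By Hilbert 90 `u = b / τ b`, and the invariant ideal `(b)` is generated by some `z` with
`τ z = ±z`; then `w = b / z` is a unit with `u = ±w / τ w`. -/
theorem exists_unit_eq_sq_or_eq_neg_sq {u : (𝓞 M)ˣ} (hu : (u : 𝓞 M) * intAut τ u = 1) :
    ∃ w : (𝓞 M)ˣ, (u : 𝓞 M) = w ^ 2 ∨ (u : 𝓞 M) = -w ^ 2 := by
  obtain ⟨b, hb0, hb⟩ := exists_mul_map_eq_of_mul_map_eq t.isQuadGen_τ.intAut_involutive
    (exists_intAut_apply_ne t.isQuadGen_τ.ne_one) one_ne_zero (by rw [hu, map_one, one_mul])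
  rw [one_mul] at hb
  obtain ⟨z, hz, hτz⟩ := t.isQuadGen_ρ.exists_eq_span_singleton_of_map_eq t.coe_a_sq
    t.isQuadGen_τ t.coe_b_sq t.residues (I := Ideal.span {b}) (by simpa using hb0) (by
      rw [Ideal.map_span, Set.image_singleton, Ideal.span_singleton_eq_span_singleton]
      exact ⟨u, by rw [mul_comm, hb]⟩)
  obtain ⟨w, rfl⟩ := (Ideal.span_singleton_eq_span_singleton.1 hz).symm
  have hz0 : z ≠ 0 := left_ne_zero_of_mul hb0
  rw [map_mul] at hb
  have hw : (u : 𝓞 M) * intAut τ w = w ∨ (u : 𝓞 M) * intAut τ w = -w := by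
    rcases hτz with hτz | hτz <;> rw [hτz] at hb
    · exact .inl (mul_left_cancel₀ hz0 (by linear_combination hb))
    · exact .inr (mul_left_cancel₀ hz0 (by linear_combination -hb))
  refine ⟨w, ?_⟩
  rcases hw with hw | hw <;> rcases t.mul_intAut_unit_eq w with hN | hN
  · left; linear_combination (w : 𝓞 M) * hw - u * hN
  · right; linear_combination -(w : 𝓞 M) * hw + u * hN
  · right; linear_combination (w : 𝓞 M) * hw - u * hN
  · left; linear_combination -(w : 𝓞 M) * hw + u * hN

variable [NumberField K]

theorem mul_intAut_unit_eq_one [Algebra A K] [IsScalarTower A M K] {α : K} {u : (𝓞 M)ˣ}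
    (h : Algebra.norm M α = (u : 𝓞 M)) :
    (u : 𝓞 M) * intAut τ u = 1 := by
  refine (t.mul_intAut_unit_eq u).resolve_right fun hneg => t.norm_ne_neg_one α ?_
  apply (algebraMap A M).injective
  rw [← Algebra.norm_norm (S := M), h, t.isQuadGen_τ.algebraMap_norm, map_neg, map_one]
  simpa only [map_mul, coe_intAut, map_neg, map_one] using congrArg (algebraMap (𝓞 M) M) hneg

theorem exists_unit_norm_eq_neg_one : ∃ e : (𝓞 K)ˣ, Algebra.norm M ((e : 𝓞 K) : K) = -1 := by
  obtain ⟨x, y, hxy⟩ := t.residues.exists_mul_sq_sub_two_mul_mul_sq_eq_one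
  have hxyK : (q : 𝓞 K) * (x : 𝓞 K) ^ 2 - 2 * p * (y : 𝓞 K) ^ 2 = 1 := by exact_mod_cast hxy
  let a' : 𝓞 K := algebraMap (𝓞 M) (𝓞 K) (algebraMap (𝓞 A) (𝓞 M) a)
  let b' : 𝓞 K := algebraMap (𝓞 M) (𝓞 K) (algebraMap (𝓞 B) (𝓞 M) b)
  have ha : a' ^ 2 = -2 := by simp only [a', ← map_pow, t.a_sq, map_neg, map_ofNat]
  have hb : b' ^ 2 = -(q : 𝓞 K) := by simp only [b', ← map_pow, t.b_sq, map_neg, map_natCast]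
  have hinv : (x * b' + y * a' * s) * -(x * b' - y * a' * s) = 1 := by
    linear_combination hxyK - x ^ 2 * hb + y ^ 2 * s ^ 2 * ha - 2 * y ^ 2 * t.s_sq
  refine ⟨.mkOfMulEqOne _ _ hinv, (algebraMap M K).injective ?_⟩
  have hσ : (x * b' + y * a' * s) * intAut σ (x * b' + y * a' * s) = -1 := by
    simp only [map_add, map_mul, map_intCast, a', b', AlgEquiv.commutes, t.intAut_s]
    linear_combination -hinv
  rw [t.isQuadGen_σ.algebraMap_norm, Units.val_mkOfMulEqOne, map_neg, map_one]
  simpa only [map_mul, coe_intAut, map_neg, map_one] using congrArg (algebraMap (𝓞 K) K) hσ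

theorem exists_unit_norm_eq [Algebra A K] [IsScalarTower A M K] (u : (𝓞 M)ˣ) (α : K)
    (h : Algebra.norm M α = (u : 𝓞 M)) :
    ∃ e : (𝓞 K)ˣ, Algebra.norm M ((e : 𝓞 K) : K) = (u : 𝓞 M) := by
  have := t.isQuadGen_σ.isQuadraticExtension
  obtain ⟨w, hw⟩ := t.exists_unit_eq_sq_or_eq_neg_sq (t.mul_intAut_unit_eq_one h)
  have hnorm : Algebra.norm M ((algebraMap (𝓞 M) (𝓞 K) w : 𝓞 K) : K) = (w : 𝓞 M) ^ 2 := by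
    rw [← Algebra.IsQuadraticExtension.finrank_eq_two M K]
    exact Algebra.norm_algebraMap _
  rcases hw with hw | hw
  · rw [hw]
    exact ⟨Units.map (algebraMap (𝓞 M) (𝓞 K) : 𝓞 M →* 𝓞 K) w, hnorm.trans (map_pow _ _ _).symm⟩
  · obtain ⟨θ, hθ⟩ := t.exists_unit_norm_eq_neg_one
    refine ⟨Units.map (algebraMap (𝓞 M) (𝓞 K)) w * θ, ?_⟩
    have hmul := congrArg₂ (· * ·) hnorm hθ
    rw [← map_mul, ← map_pow, ← map_mul, mul_neg_one, ← map_neg] at hmul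
    rw [hw]
    exact hmul

end Tower

end Tower

section Splitting

theorem odd_of_sq_sub_mul_sq_eq_neg_two {p : ℕ} (hp : Odd p) {x y : ℤ}
    (h : x ^ 2 - p * y ^ 2 = -2) : Odd x := by
  by_contra hx
  obtain ⟨m, rfl⟩ := even_iff_two_dvd.1 (Int.not_odd_iff_even.1 hx)
  have hpy : Even ((p : ℤ) * y ^ 2) := ⟨2 * m ^ 2 + 1, by linear_combination -h⟩
  have hy : Even y := by
    rw [Int.even_mul, Int.even_coe_nat, Int.even_pow' two_ne_zero] at hpy
    exact hpy.resolve_left (Nat.not_even_iff_odd.2 hp)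
  obtain ⟨n, rfl⟩ := even_iff_two_dvd.1 hy
  have : 4 * (m ^ 2 - p * n ^ 2) = -2 := by linear_combination h
  omega

theorem isCoprime_of_isCoprime_add_mul {R : Type*} [CommRing R] {α β : R}
    (h : IsCoprime (α + β) (α * β)) : IsCoprime α β := by
  obtain ⟨m, n, hmn⟩ := h
  exact ⟨m + n * β, m, by linear_combination hmn⟩

theorem exists_eq_mul_sq_of_mul_eq_mul_sq {R : Type*} [CommRing R] [IsDomain R]
    [IsPrincipalIdealRing R] {α β r y : R} (hr : r ≠ 0) (h : α * β = r * y ^ 2)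
    (hαβ : IsCoprime α β) : ∃ π π' v : R, π * π' = r ∧ α = π * v ^ 2 ∧ π' ∣ β := by
  obtain ⟨π, π', ⟨w, rfl⟩, ⟨w', rfl⟩, rfl⟩ := exists_dvd_and_dvd_of_dvd_mul (Dvd.intro _ h.symm)
  obtain ⟨v, u, rfl⟩ := exists_associated_pow_of_mul_eq_pow' (c := y) (k := 2)
    hαβ.of_mul_left_right.of_mul_right_right (mul_left_cancel₀ hr (by linear_combination h))
  refine ⟨π * u, π' * (u⁻¹ : Rˣ), v, ?_, by ring, ?_⟩
  · linear_combination π * π' * u.mul_inv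
  · exact u⁻¹.isUnit.mul_right_dvd.2 (dvd_mul_right π' w')

theorem associated_map_of_involutive {R : Type*} [CommRing R] [IsDomain R] {ρ : R →+* R}
    (hρ : Function.Involutive ρ) {α π π' : R} (hα : IsCoprime α (ρ α)) (hπ : π ∣ α)
    (hπ' : π' ∣ ρ α) (h : ρ (π * π') = π * π') : Associated (ρ π) π' := by
  rw [map_mul] at h
  have hρπ : ρ π ∣ ρ α := map_dvd ρ hπ
  have hρπ' : ρ π' ∣ α := hρ α ▸ map_dvd ρ hπ'
  exact associated_of_dvd_dvd
    (((hα.of_isCoprime_of_dvd_left hπ).of_isCoprime_of_dvd_right hρπ).symm.dvd_of_dvd_mul_left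
      (Dvd.intro _ h))
    (((hα.of_isCoprime_of_dvd_left hρπ').of_isCoprime_of_dvd_right hπ').symm.dvd_of_dvd_mul_right
      (Dvd.intro_left _ h.symm))

variable {A : Type*} [Field A] [NumberField A]

theorem IsQuadGen.exists_add_eq_mul_sq {a : 𝓞 A} {ρ : A ≃ₐ[ℚ] A} (hA : IsQuadGen (a : A) ρ)
    (ha : a ^ 2 = -2) {p : ℕ} (hp : Odd p) {x y : ℤ} (h : x ^ 2 - p * y ^ 2 = -2) :
    ∃ π π' v : 𝓞 A, π * π' = p ∧ IsCoprime π π' ∧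
      Ideal.absNorm (Ideal.span {π}) = Ideal.absNorm (Ideal.span {π'}) ∧
      x + a = π * v ^ 2 := by
  have := hA.isPrincipalIdealRing_of_sq_eq_neg_two
    (by simpa only [map_pow, map_neg, map_ofNat] using congrArg (algebraMap (𝓞 A) A) ha)
  have hρa : intAut ρ a = -a :=
    RingOfIntegers.coe_injective (by simp only [coe_intAut, hA.map_eq_neg, map_neg])
  have hρ : intAut ρ (x + a) = x - a := by rw [map_add, hρa, map_intCast, sub_eq_add_neg]
  have hmul : ((x : 𝓞 A) + a) * (x - a) = p * y ^ 2 := by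
    have hO : (x : 𝓞 A) ^ 2 - p * (y : 𝓞 A) ^ 2 = -2 := by exact_mod_cast congrArg Int.cast h
    linear_combination hO - ha
  have hcop : IsCoprime ((x : 𝓞 A) + a) (x - a) := by
    have hx := odd_of_sq_sub_mul_sq_eq_neg_two hp h
    have hxZ : IsCoprime (2 * x) (2 + x * x) := .mul_left
      (Int.isCoprime_two_left.2 (even_two.add_odd (hx.mul hx)))
      ((Int.isCoprime_two_left.2 hx).symm.add_mul_left_right x)
    refine isCoprime_of_isCoprime_add_mul ?_
    convert hxZ.map (Int.castRingHom (𝓞 A)) using 1 <;>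
      simp only [eq_intCast, Int.cast_add, Int.cast_mul, Int.cast_ofNat]
    · ring
    · linear_combination -ha
  obtain ⟨π, π', v, hππ, hv, hπ'⟩ := exists_eq_mul_sq_of_mul_eq_mul_sq
    (by exact_mod_cast hp.pos.ne') hmul hcop
  have hπ : π ∣ x + a := hv ▸ dvd_mul_right _ _
  have hass : Associated (intAut ρ π) π' := associated_map_of_involutive (ρ := intAut ρ)
    hA.intAut_involutive (hρ ▸ hcop) hπ (hρ ▸ hπ') (by simp [hππ])
  refine ⟨π, π', v, hππ, hcop.of_isCoprime_of_dvd_left hπ |>.of_isCoprime_of_dvd_right hπ', ?_, hv⟩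
  rw [← Ideal.span_singleton_eq_span_singleton.2 hass, ← absNorm_map_intAut ρ, Ideal.map_span,
    Set.image_singleton]

end Splitting

section Squares

section CommRing

variable {R : Type*} [CommRing R]

theorem span_pair_sq_eq_span_singleton {π π' s : R} (hs : s ^ 2 = π * π') (h : IsCoprime π π') :
    Ideal.span {π, s} ^ 2 = Ideal.span {π} := by
  obtain ⟨m, n, hmn⟩ := h
  rw [sq, Ideal.span_pair_mul_span_pair]
  apply le_antisymm
  · rw [Ideal.span_le]
    rintro z (rfl | rfl | rfl | rfl)
    all_goals rw [SetLike.mem_coe, Ideal.mem_span_singleton]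
    · exact dvd_mul_right _ _
    · exact dvd_mul_right _ _
    · exact dvd_mul_left _ _
    · rw [← sq, hs]; exact dvd_mul_right _ _
  · rw [Ideal.span_singleton_le_iff_mem]
    have hππ : π * π ∈ Ideal.span {π * π, π * s, s * π, s * s} := Ideal.subset_span (by simp)
    have hss : s * s ∈ Ideal.span {π * π, π * s, s * π, s * s} := Ideal.subset_span (by simp)
    convert add_mem (Ideal.mul_mem_left _ m hππ) (Ideal.mul_mem_left _ n hss) using 1
    linear_combination -π * hmn - n * hs

theorem span_pair_mul_span_pair_eq_span_singleton {π π' s : R} (hs : s ^ 2 = π * π')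
    (h : IsCoprime π π') : Ideal.span {π, s} * Ideal.span {π', s} = Ideal.span {s} := by
  obtain ⟨m, n, hmn⟩ := h
  rw [Ideal.span_pair_mul_span_pair]
  apply le_antisymm
  · rw [Ideal.span_le]
    rintro z (rfl | rfl | rfl | rfl)
    all_goals rw [SetLike.mem_coe, Ideal.mem_span_singleton]
    · rw [← hs]; exact dvd_pow_self _ two_ne_zero
    · exact dvd_mul_left _ _
    · exact dvd_mul_right _ _
    · exact dvd_mul_right _ _
  · rw [Ideal.span_singleton_le_iff_mem]
    have hπs : π * s ∈ Ideal.span {π * π', π * s, s * π', s * s} := Ideal.subset_span (by simp)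
    have hsπ' : s * π' ∈ Ideal.span {π * π', π * s, s * π', s * s} := Ideal.subset_span (by simp)
    convert add_mem (Ideal.mul_mem_left _ m hπs) (Ideal.mul_mem_left _ n hsπ') using 1
    linear_combination -s * hmn

/-- `g` lies in `P` but `f` does not, so `g ^ 2 ∈ P ^ 2` forces `a ∈ P ^ 2`. -/
theorem mem_sq_of_sq_eq_mul [IsDedekindDomain R] {P : Ideal R} [P.IsPrime] {a g f : R} {e : Rˣ}
    (hg : g ^ 2 = a * f * e) (hf : IsCoprime a f) (ha : a ∈ P) : a ∈ P ^ 2 := by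
  have hgP : g ∈ P := by
    refine Ideal.IsPrime.mem_of_pow_mem ‹_› 2 ?_
    rw [hg, mul_assoc]
    exact P.mul_mem_right _ ha
  have hmul : (f * e) * a ∈ P ^ 2 := by
    rw [mul_right_comm, mul_comm f, ← hg]
    exact Ideal.pow_mem_pow hgP 2
  refine (Ideal.IsPrime.mul_mem_pow P hmul).resolve_left fun hfe => ?_
  have hfP : f ∈ P := (P.mul_unit_mem_iff_mem e.isUnit).1 hfe
  obtain ⟨m, n, hmn⟩ := hf
  exact Ideal.IsPrime.ne_top ‹_› ((Ideal.eq_top_iff_one _).2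
    (hmn ▸ add_mem (P.mul_mem_left m ha) (P.mul_mem_left n hfP)))

theorem exists_isMaximal_mem_of_mul_map_eq {τ : R →+* R} {n w c : R} (hn : ¬ IsUnit n)
    (hτn : τ n = n) (h : w * τ w = n * c) : ∃ P : Ideal R, P.IsMaximal ∧ n ∈ P ∧ w ∈ P := by
  have hne : Ideal.span {n, w} ≠ ⊤ := by
    rw [Ideal.span_insert, Ne, ← Ideal.isCoprime_iff_sup_eq, Ideal.isCoprime_span_singleton_iff]
    intro hcop
    have hτcop : IsCoprime n (τ w) := by simpa only [hτn] using hcop.map τ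
    exact hn ((hcop.mul_right hτcop).isUnit_of_dvd (h ▸ dvd_mul_right n c))
  obtain ⟨P, hP, hle⟩ := Ideal.exists_le_maximal _ hne
  exact ⟨P, hP, hle (Ideal.subset_span (by simp)), hle (Ideal.subset_span (by simp))⟩

end CommRing

variable {K : Type*} [Field K] [NumberField K]

theorem not_isUnit_two : ¬ IsUnit (2 : 𝓞 K) := by
  rw [← Ideal.span_singleton_eq_top, ← Ideal.absNorm_eq_one_iff, ← Nat.cast_ofNat,
    Ideal.absNorm_span_natCast, Nat.pow_eq_one]
  have := Module.finrank_pos (R := ℤ) (M := 𝓞 K)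
  omega

theorem exists_mul_eq_add_mul {p : ℕ} {x y : ℤ} (h : x ^ 2 - p * y ^ 2 = -2) {a s : 𝓞 K}
    (ha : a ^ 2 = -2) (hs : s ^ 2 = p) :
    ∃ ψ : 𝓞 K, a * ψ = x + y * s ∧ ψ ^ 2 = -(x ^ 2 + 1 + x * y * s) := by
  have haK : (a : K) ^ 2 = -2 := by
    simpa only [map_pow, map_neg, map_ofNat] using congrArg (algebraMap (𝓞 K) K) ha
  have hsK : (s : K) ^ 2 = p := by
    simpa only [map_pow, map_natCast] using congrArg (algebraMap (𝓞 K) K) hs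
  have ha0 : (a : K) ≠ 0 := fun h0 => by norm_num [h0] at haK
  have hK : (x : K) ^ 2 - p * (y : K) ^ 2 = -2 := by exact_mod_cast congrArg Int.cast h
  have hsq : ((x + y * s : K) / a) ^ 2 = ((-(x ^ 2 + 1 + x * y * s) : 𝓞 K) : K) := by
    simp only [map_neg, map_add, map_mul, map_pow, map_intCast, map_one]
    rw [div_pow, haK, div_eq_iff (by norm_num)]
    linear_combination -(1 : K) * hK + (y : K) ^ 2 * hsK
  have hint : IsIntegral ℤ ((x + y * s : K) / a) :=
    .of_pow two_pos (hsq ▸ RingOfIntegers.isIntegral_coe _)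
  obtain ⟨ψ, hψ⟩ : ∃ ψ : 𝓞 K, (ψ : K) = (x + y * s : K) / a := ⟨⟨_, hint⟩, rfl⟩
  refine ⟨ψ, RingOfIntegers.coe_injective ?_, RingOfIntegers.coe_injective ?_⟩
  · simp only [map_mul, map_add, map_intCast, hψ]
    field_simp
  · simp only [map_pow, hψ, hsq]

theorem exists_sq_eq_mul_unit {p : ℕ} {x y : ℤ} (h : x ^ 2 - p * y ^ 2 = -2) {a s : 𝓞 K}
    (ha : a ^ 2 = -2) (hs : s ^ 2 = p) :
    ∃ (e : (𝓞 K)ˣ) (g : 𝓞 K), g ^ 2 = a * (x + a) * e := by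
  have hO : (x : 𝓞 K) ^ 2 - p * (y : 𝓞 K) ^ 2 = -2 := by exact_mod_cast congrArg Int.cast h
  obtain ⟨ψ, hψ, hψ2⟩ := exists_mul_eq_add_mul h ha hs
  obtain ⟨ψ', hψ', -⟩ := exists_mul_eq_add_mul (x := x) (y := -y) (by rwa [neg_sq]) ha hs
  push_cast at hψ'
  have hinv : ψ * ψ' = 1 := by
    refine mul_left_cancel₀ (show (-2 : 𝓞 K) ≠ 0 by norm_num) ?_
    rw [← ha]
    linear_combination a * ψ' * hψ + (x + y * s) * hψ' - (y : 𝓞 K) ^ 2 * hs + hO - ha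
  refine ⟨-Units.mkOfMulEqOne ψ ψ' hinv, 1 + ψ, ?_⟩
  rw [Units.val_neg, Units.val_mkOfMulEqOne]
  linear_combination hψ2 + (x + a) * hψ - ψ * ha - a * hψ - (-ψ - ψ) * ha

theorem eq_two_of_mul_dvd_four {m n : ℕ} (h : m * n ∣ 4) (hm : m ≠ 1) (hn : n ≠ 1) :
    m = 2 ∧ n = 2 := by
  have hm4 : m ≤ 4 := Nat.le_of_dvd four_pos (dvd_of_mul_right_dvd h)
  have hn4 : n ≤ 4 := Nat.le_of_dvd four_pos (dvd_of_mul_left_dvd h)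
  interval_cases m <;> interval_cases n <;> omega

section PrimesOverTwo

variable {P Q : Ideal (𝓞 K)} [P.IsPrime] [Q.IsPrime] {a g f w : 𝓞 K} {e : (𝓞 K)ˣ}
  (hK : Module.finrank ℚ K = 8) (ha : a ^ 2 = -2) (hg : g ^ 2 = a * f * e) (hf : IsCoprime a f)
  (hPtwo : 2 ∈ P) (hQtwo : 2 ∈ Q) (hP : w ∈ P) (hQ : 1 - w ∈ Q)

include ha hg hf hPtwo hQtwo hP hQ

theorem sq_mul_sq_dvd_span_singleton : P ^ 2 * Q ^ 2 ∣ Ideal.span {a} := by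
  have hcop : IsCoprime P Q := Ideal.isCoprime_iff_exists.2 ⟨w, hP, 1 - w, hQ, by ring⟩
  have mem_sq {I : Ideal (𝓞 K)} [I.IsPrime] (hI : 2 ∈ I) : a ∈ I ^ 2 := mem_sq_of_sq_eq_mul hg hf
    (Ideal.IsPrime.mem_of_pow_mem ‹_› 2 (by rw [ha]; exact neg_mem hI))
  exact (hcop.pow (m := 2) (n := 2)).mul_dvd (Ideal.dvd_span_singleton.2 (mem_sq hPtwo))
    (Ideal.dvd_span_singleton.2 (mem_sq hQtwo))

include hK

theorem absNorm_eq_two_of_two_mem : Ideal.absNorm P = 2 ∧ Ideal.absNorm Q = 2 := by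
  have hdvd := map_dvd Ideal.absNorm
    (sq_mul_sq_dvd_span_singleton ha hg hf hPtwo hQtwo hP hQ)
  rw [absNorm_span_singleton_eq_pow (n := 2) (d := 4) hK (.inr (by exact_mod_cast ha)), map_mul,
    map_pow, map_pow, ← mul_pow, show 2 ^ 4 = 4 ^ 2 by norm_num,
    Nat.pow_dvd_pow_iff two_ne_zero] at hdvd
  exact eq_two_of_mul_dvd_four hdvd (mt Ideal.absNorm_eq_one_iff.1 (Ideal.IsPrime.ne_top ‹_›))
    (mt Ideal.absNorm_eq_one_iff.1 (Ideal.IsPrime.ne_top ‹_›))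

theorem sq_mul_sq_eq_span_singleton : P ^ 2 * Q ^ 2 = Ideal.span {a} := by
  have hdvd := sq_mul_sq_dvd_span_singleton ha hg hf hPtwo hQtwo hP hQ
  obtain ⟨hNP, hNQ⟩ := absNorm_eq_two_of_two_mem hK ha hg hf hPtwo hQtwo hP hQ
  have ha0 : a ≠ 0 := by
    rintro rfl
    norm_num at ha
  refine (ideal_eq_of_le_of_absNorm_le (by simpa using ha0) (Ideal.le_of_dvd hdvd) ?_).symm
  rw [absNorm_span_singleton_eq_pow (n := 2) (d := 4) hK (.inr (by exact_mod_cast ha)), map_mul,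
    map_pow, map_pow, hNP, hNQ, ← pow_add]

theorem eq_of_two_mem_of_mem {P' : Ideal (𝓞 K)} [P'.IsPrime] (hP'two : 2 ∈ P') (hP' : w ∈ P') :
    P' = P := by
  have hQ0 : Q ≠ 0 := by
    rintro rfl
    exact absurd (absNorm_eq_two_of_two_mem hK ha hg hf hPtwo hQtwo hP hQ).2 (by simp)
  have hsq := (sq_mul_sq_eq_span_singleton hK ha hg hf hP'two hQtwo hP' hQ).trans
    (sq_mul_sq_eq_span_singleton hK ha hg hf hPtwo hQtwo hP hQ).symm
  exact pow_left_injective two_ne_zero (mul_right_cancel₀ (pow_ne_zero 2 hQ0) hsq)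

end PrimesOverTwo

end Squares

section TowerClasses

open scoped nonZeroDivisors

section CommRing

variable {R : Type*} [CommRing R]

theorem isCoprime_intCast_add_of_sq_eq_neg_two {a : R} (ha : a ^ 2 = -2) {x : ℤ} (hx : Odd x) :
    IsCoprime a (x + a) := by
  obtain ⟨n, rfl⟩ := hx
  refine ⟨a * n - 1, 1, ?_⟩
  push_cast
  linear_combination (n : R) * ha

variable [IsDedekindDomain R]

theorem isPrincipal_of_sq_eq_span_singleton {I : Ideal R} {r v g : R} {e : Rˣ} (hv : v ≠ 0)
    (hI : I ^ 2 = Ideal.span {r}) (hg : g ^ 2 = r * v ^ 2 * e) : I.IsPrincipal := by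
  have hsq : (Ideal.span {v} * I) ^ 2 = Ideal.span {g} ^ 2 := by
    rw [mul_pow, hI, Ideal.span_singleton_pow, Ideal.span_singleton_mul_span_singleton,
      Ideal.span_singleton_pow, hg, Ideal.span_singleton_mul_right_unit e.isUnit, mul_comm]
  obtain ⟨c, -, hc⟩ :=
    exists_eq_span_singleton_of_span_mul_eq hv (pow_left_injective two_ne_zero hsq)
  exact ⟨c, hc⟩

theorem mk0_mul_eq_one_iff (I J : (Ideal R)⁰) :
    ClassGroup.mk0 I * ClassGroup.mk0 J = 1 ↔ ((I : Ideal R) * (J : Ideal R)).IsPrincipal := by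
  rw [← map_mul, ← Submonoid.coe_mul]
  exact ClassGroup.mk0_eq_one_iff (I * J).2

theorem mk0_mem_of_isPrincipal_mul {H : Subgroup (ClassGroup R)} {I J : (Ideal R)⁰}
    (h : ((I : Ideal R) * (J : Ideal R)).IsPrincipal) (hJ : ClassGroup.mk0 J ∈ H) :
    ClassGroup.mk0 I ∈ H := by
  rw [eq_inv_of_mul_eq_one_left ((mk0_mul_eq_one_iff I J).2 h)]
  exact inv_mem hJ

theorem mk0_mem_closure_pair {P P₁ T : (Ideal R)⁰}
    (h : ((P : Ideal R) = T ∨ ((P : Ideal R) * (P₁ * T : (Ideal R)⁰)).IsPrincipal) ∨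
      ((P : Ideal R) = P₁ ∨ ((P : Ideal R) * P₁).IsPrincipal)) :
    ClassGroup.mk0 P ∈ Subgroup.closure {ClassGroup.mk0 P₁, ClassGroup.mk0 T} := by
  set H := Subgroup.closure {ClassGroup.mk0 P₁, ClassGroup.mk0 T}
  have hP₁ : ClassGroup.mk0 P₁ ∈ H := Subgroup.subset_closure (by simp)
  have hT : ClassGroup.mk0 T ∈ H := Subgroup.subset_closure (by simp)
  rcases h with (h | h) | (h | h)
  · rwa [Subtype.ext h]
  · exact mk0_mem_of_isPrincipal_mul h (by rw [map_mul]; exact mul_mem hP₁ hT)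
  · rwa [Subtype.ext h]
  · exact mk0_mem_of_isPrincipal_mul h hP₁

end CommRing

theorem exists_isMaximal_mem_of_mul_intAut_eq {A M K : Type*} [Field A] [Field M] [NumberField M]
    [Field K] [Algebra A M] [Algebra M K] {τ : M ≃ₐ[A] M} {w j : 𝓞 M}
    (h : w * intAut τ w = 2 * j) :
    ∃ P : Ideal (𝓞 K), P.IsMaximal ∧ 2 ∈ P ∧ algebraMap (𝓞 M) (𝓞 K) w ∈ P := by
  obtain ⟨P, hP, htwo, hw⟩ := exists_isMaximal_mem_of_mul_map_eq
    (τ := RingHomClass.toRingHom (intAut τ)) not_isUnit_two (map_ofNat _ 2) h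
  obtain ⟨Q, hQ, hQP⟩ := Ideal.exists_maximal_ideal_liesOver_of_isIntegral (S := 𝓞 K) P
  refine ⟨Q, hQ, ?_, (Ideal.mem_of_liesOver Q P w).1 hw⟩
  simpa only [map_ofNat] using (Ideal.mem_of_liesOver Q P 2).1 htwo

theorem absNorm_span_pair_eq_sq {K : Type*} [Field K] [NumberField K]
    (hK : Module.finrank ℚ K = 8) {p : ℕ} {s π π' : 𝓞 K} (hs : s ^ 2 = p) (hπ : π * π' = p)
    (hcop : IsCoprime π π')
    (hN : Ideal.absNorm (Ideal.span {π}) = Ideal.absNorm (Ideal.span {π'})) :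
    Ideal.absNorm (Ideal.span {π, s}) = p ^ 2 := by
  have hsq : Ideal.absNorm (Ideal.span {π}) ^ 2 = (p ^ 4) ^ 2 := by
    conv_lhs => rw [sq]; arg 2; rw [hN]
    rw [← map_mul, Ideal.span_singleton_mul_span_singleton, hπ, Ideal.absNorm_span_natCast,
      RingOfIntegers.rank, hK, ← pow_mul]
  refine Nat.pow_left_injective two_ne_zero ?_
  beta_reduce
  rw [← map_pow, span_pair_sq_eq_span_singleton (hs.trans hπ.symm) hcop,
    Nat.pow_left_injective two_ne_zero hsq, ← pow_mul]

variable {A B M K : Type*} [Field A] [Field B] [Field M] [Field K] [NumberField A] [NumberField B]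
  [Algebra A M] [Algebra B M] [Algebra M K]

/-- Ideals `T` over `2` and `P₁` over `p` whose classes generate those of all prime ideals
ramified in `K / M`. -/
structure RamifiedIdeals [NumberField K] (p : ℕ) (σ : K ≃ₐ[M] K) (T P₁ : (Ideal (𝓞 K))⁰) :
    Prop where
  absNorm_T : Ideal.absNorm (T : Ideal (𝓞 K)) = 2
  absNorm_P₁ : Ideal.absNorm (P₁ : Ideal (𝓞 K)) = p ^ 2
  natCast_mem : (p : 𝓞 K) ∈ (P₁ : Ideal (𝓞 K))
  isPrincipal_sq : ((P₁ : Ideal (𝓞 K)) ^ 2).IsPrincipal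
  exists_sq_eq_map : ∃ J : Ideal (𝓞 M), (T : Ideal (𝓞 K)) ^ 2 = J.map (algebraMap (𝓞 M) (𝓞 K))
  mk0_mem_closure (P : (Ideal (𝓞 K))⁰) (hP : (P : Ideal (𝓞 K)).IsPrime)
    (h : ∀ z, z - intAut σ z ∈ (P : Ideal (𝓞 K))) :
    ClassGroup.mk0 P ∈ Subgroup.closure {ClassGroup.mk0 P₁, ClassGroup.mk0 T}

namespace Tower

variable {p q : ℕ} {a : 𝓞 A} {b : 𝓞 B} {ω : 𝓞 M} {s : 𝓞 K} {ρ : A ≃ₐ[ℚ] A}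
    {β : B ≃ₐ[ℚ] B} {κ : M ≃ₐ[B] M} {τ : M ≃ₐ[A] M} {σ : K ≃ₐ[M] K}
    (t : Tower p q a b ω s ρ β κ τ σ)

include t

theorem algebraMap_a_sq [Algebra A K] : (algebraMap (𝓞 A) (𝓞 K) a) ^ 2 = -2 := by
  rw [← map_pow, t.a_sq, map_neg, map_ofNat]

theorem exists_intCast_add_eq_mul_sq [NumberField K] [Algebra A K] :
    ∃ (x y : ℤ) (π π' v : 𝓞 K), x ^ 2 - p * y ^ 2 = -2 ∧ Odd x ∧ π * π' = p ∧ IsCoprime π π' ∧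
    Ideal.absNorm (Ideal.span {π}) = Ideal.absNorm (Ideal.span {π'}) ∧
    x + algebraMap (𝓞 A) (𝓞 K) a = π * v ^ 2 := by
  have hp : Odd p := t.residues.prime_p.odd_of_ne_two t.p_ne_two
  obtain ⟨x, y, hxy⟩ := t.residues.exists_sq_sub_mul_sq_eq_neg_two
  obtain ⟨π, π', v, hππ, hcop, hN, hv⟩ := t.isQuadGen_ρ.exists_add_eq_mul_sq t.a_sq hp hxy
  have absNorm_map (z : 𝓞 A) : Ideal.absNorm (Ideal.span {algebraMap (𝓞 A) (𝓞 K) z}) =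
      Ideal.absNorm (Ideal.span {z}) ^ Module.finrank (𝓞 A) (𝓞 K) := by
    rw [← Ideal.absNorm_algebraMap (𝓞 A) (𝓞 K), Ideal.map_span, Set.image_singleton]
  refine ⟨x, y, algebraMap _ _ π, algebraMap _ _ π', algebraMap _ _ v, hxy,
    odd_of_sq_sub_mul_sq_eq_neg_two hp hxy, ?_, hcop.map _, ?_, ?_⟩
  · rw [← map_mul, hππ, map_natCast]
  · rw [absNorm_map, absNorm_map, hN]
  · rw [← map_pow, ← map_mul, ← hv, map_add, map_intCast]

variable [NumberField M]

theorem intAut_ω : intAut τ ω = 1 - ω := by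
  have hb : intAut τ (algebraMap (𝓞 B) (𝓞 M) b) = -algebraMap (𝓞 B) (𝓞 M) b :=
    RingOfIntegers.coe_injective t.isQuadGen_τ.map_eq_neg
  have hω := congrArg (intAut τ) t.two_mul_ω
  rw [map_mul, map_ofNat, map_add, map_one, hb] at hω
  refine mul_left_cancel₀ (two_ne_zero (α := 𝓞 M)) ?_
  linear_combination hω + t.two_mul_ω

theorem exists_ω_mul_eq : ∃ j : 𝓞 M, ω * (1 - ω) = 2 * j := by
  have hb : (algebraMap (𝓞 B) (𝓞 M) b) ^ 2 = -(q : 𝓞 M) := by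
    rw [← map_pow, t.b_sq, map_neg, map_natCast]
  have hq : (q : 𝓞 M) = 8 * (q / 8 : ℕ) + 7 := by
    have hdiv : q = 8 * (q / 8) + 7 := by have := t.residues.q_mod; omega
    exact_mod_cast congrArg Nat.cast hdiv
  refine ⟨(q / 8 : ℕ) + 1, mul_left_cancel₀ (show (4 : 𝓞 M) ≠ 0 by norm_num) ?_⟩
  linear_combination (-2 * ω + 1 - algebraMap (𝓞 B) (𝓞 M) b) * t.two_mul_ω - hb + hq

variable [NumberField K]

theorem finrank_K : Module.finrank ℚ K = 8 := by
  have := t.isQuadGen_σ.isQuadraticExtension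
  rw [← Module.finrank_mul_finrank ℚ M K, t.isQuadGen_ρ.finrank_rat_eq_four t.isQuadGen_τ,
    Algebra.IsQuadraticExtension.finrank_eq_two M K]

theorem eq_span_pair_of_s_mem {π π' : 𝓞 K} (hπ : π * π' = p) (hcop : IsCoprime π π')
    (hN : Ideal.absNorm (Ideal.span {π}) = Ideal.absNorm (Ideal.span {π'})) {P : Ideal (𝓞 K)}
    (hP : P.IsPrime) (hsP : s ∈ P) : P = Ideal.span {π, s} ∨ P = Ideal.span {π', s} := by
  have hpP : (p : 𝓞 K) ∈ P := by
    rw [← t.s_sq, sq]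
    exact P.mul_mem_right _ hsP
  have hle : p ^ 2 ≤ Ideal.absNorm P :=
    sq_le_absNorm_of_not_isSquare (z := algebraMap (𝓞 M) (𝓞 K) (algebraMap (𝓞 B) (𝓞 M) b))
      (n := -q) hP.ne_top t.residues.prime_p hpP (by rw [← map_pow, ← map_pow, t.b_sq]; simp)
      (by simpa using t.residues.neg_q_p)
  have eq_span {ϖ : 𝓞 K} (hϖ : ϖ ∈ P) (hNϖ : Ideal.absNorm (Ideal.span {ϖ, s}) = p ^ 2) :
      P = Ideal.span {ϖ, s} := by
    refine (ideal_eq_of_le_of_absNorm_le ?_ ?_ (hNϖ.trans_le hle)).symm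
    · rw [Ne, ← Ideal.absNorm_eq_zero_iff, hNϖ]
      exact pow_ne_zero 2 t.residues.prime_p.ne_zero
    · rw [Ideal.span_le]
      rintro _ (rfl | rfl) <;> assumption
  refine (hP.mem_or_mem (hπ ▸ hpP)).imp (fun h => eq_span h ?_) fun h => eq_span h ?_
  · exact absNorm_span_pair_eq_sq t.finrank_K t.s_sq hπ hcop hN
  · exact absNorm_span_pair_eq_sq t.finrank_K t.s_sq (by rw [mul_comm, hπ]) hcop.symm hN.symm

variable [Algebra A K]

/-- `2` divides `ω * (1 - ω)`; `T` is the prime over `2` containing `ω`, and `T'` the one containing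
`1 - ω`. -/
theorem exists_primes_over_two {g f : 𝓞 K} {e : (𝓞 K)ˣ}
    (hg : g ^ 2 = algebraMap (𝓞 A) (𝓞 K) a * f * e)
    (hf : IsCoprime (algebraMap (𝓞 A) (𝓞 K) a) f) :
    ∃ T T' : Ideal (𝓞 K), T ^ 2 * T' ^ 2 = Ideal.span {algebraMap (𝓞 A) (𝓞 K) a} ∧
      Ideal.absNorm T = 2 ∧ T.map (intAut σ) = T ∧
      ∀ P : Ideal (𝓞 K), P.IsPrime → 2 ∈ P → P = T ∨ P = T' := by
  set w := algebraMap (𝓞 M) (𝓞 K) ω with hw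
  have ha := t.algebraMap_a_sq
  obtain ⟨j, hj⟩ := t.exists_ω_mul_eq
  obtain ⟨T, hT, hTtwo, hTw⟩ := exists_isMaximal_mem_of_mul_intAut_eq (K := K) (τ := τ)
    (w := ω) (j := j) (by rw [t.intAut_ω, hj])
  obtain ⟨T', hT', hT'two, hT'w⟩ := exists_isMaximal_mem_of_mul_intAut_eq (K := K) (τ := τ)
    (w := 1 - ω) (j := j) (by rw [map_sub, map_one, t.intAut_ω, ← hj]; ring)
  rw [map_sub, map_one, ← hw] at hT'w
  have eq_T {P : Ideal (𝓞 K)} (hP : P.IsPrime) (hPtwo : 2 ∈ P) (hPw : w ∈ P) : P = T :=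
    eq_of_two_mem_of_mem t.finrank_K ha hg hf hTtwo hT'two hTw hT'w hPtwo hPw
  have eq_T' {P : Ideal (𝓞 K)} (hP : P.IsPrime) (hPtwo : 2 ∈ P) (hPw : 1 - w ∈ P) : P = T' :=
    eq_of_two_mem_of_mem t.finrank_K ha hg hf hT'two hTtwo hT'w (by rwa [sub_sub_cancel]) hPtwo hPw
  refine ⟨T, T', sq_mul_sq_eq_span_singleton t.finrank_K ha hg hf hTtwo hT'two hTw hT'w,
    (absNorm_eq_two_of_two_mem t.finrank_K ha hg hf hTtwo hT'two hTw hT'w).1, ?_, ?_⟩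
  · refine eq_T (Ideal.map_isPrime_of_equiv (intAut σ)) ?_ ?_
    · simpa only [map_ofNat] using Ideal.mem_map_of_mem (intAut σ) hTtwo
    · simpa only [hw, AlgEquiv.commutes] using Ideal.mem_map_of_mem (intAut σ) hTw
  · intro P hP hPtwo
    have hmem : w * (1 - w) ∈ P := by
      rw [hw, ← map_one (algebraMap (𝓞 M) (𝓞 K)), ← map_sub, ← map_mul, hj, map_mul, map_ofNat]
      exact P.mul_mem_right _ hPtwo
    exact (hP.mem_or_mem hmem).imp (eq_T hP hPtwo) (eq_T' hP hPtwo)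

/-- With `P₁ ^ 2 = (π)` and `π v ^ 2 = x + √-2`, the element `√-2 (x + √-2)` being a square up to a
unit makes `T T' P₁` principal. -/
theorem exists_ramifiedIdeals : ∃ T P₁ : (Ideal (𝓞 K))⁰, RamifiedIdeals p σ T P₁ := by
  obtain ⟨x, y, π, π', v, hxy, hx, hπ, hcop, hN, hv⟩ := t.exists_intCast_add_eq_mul_sq (K := K)
  have ha := t.algebraMap_a_sq
  have hax := isCoprime_intCast_add_of_sq_eq_neg_two ha hx
  obtain ⟨e, g, hg⟩ := exists_sq_eq_mul_unit hxy ha t.s_sq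
  obtain ⟨T, T', hTT', hNT, hσT, eq_T⟩ := t.exists_primes_over_two hg hax
  have hs : s ^ 2 = π * π' := t.s_sq.trans hπ.symm
  have hsq := span_pair_sq_eq_span_singleton hs hcop
  have hNP := absNorm_span_pair_eq_sq t.finrank_K t.s_sq hπ hcop hN
  have hv0 : v ≠ 0 := by
    rintro rfl
    rw [hv, sq, mul_zero, mul_zero, isCoprime_zero_right] at hax
    exact not_isUnit_two ((IsUnit.neg_iff _).1 (ha ▸ hax.pow 2))
  have hprin : (T' * (Ideal.span {π, s} * T)).IsPrincipal := by
    refine isPrincipal_of_sq_eq_span_singleton (r := algebraMap (𝓞 A) (𝓞 K) a * π) (g := g)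
      (e := e) hv0 ?_ (by rw [hg, hv]; ring)
    rw [mul_pow, mul_pow, hsq, ← Ideal.span_singleton_mul_span_singleton, ← hTT']
    ring
  have hT0 : T ∈ (Ideal (𝓞 K))⁰ :=
    Ideal.absNorm_ne_zero_iff_mem_nonZeroDivisors.1 (hNT ▸ two_ne_zero)
  have hP0 : Ideal.span {π, s} ∈ (Ideal (𝓞 K))⁰ := Ideal.absNorm_ne_zero_iff_mem_nonZeroDivisors.1
    (hNP ▸ pow_ne_zero 2 t.residues.prime_p.ne_zero)
  refine ⟨⟨T, hT0⟩, ⟨_, hP0⟩, hNT, hNP, ?_, ⟨π, hsq⟩, ⟨Ideal.relNorm (𝓞 M) T, ?_⟩, ?_⟩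
  · rw [← hπ]
    exact Ideal.mul_mem_right _ _ (Ideal.subset_span (by simp))
  · rw [t.isQuadGen_σ.map_relNorm, hσT, sq]
  · intro P hP hram
    have hmem : 2 * s ∈ (P : Ideal (𝓞 K)) := by
      simpa only [t.intAut_s, sub_neg_eq_add, ← two_mul] using hram s
    refine mk0_mem_closure_pair ((hP.mem_or_mem hmem).imp (fun htwo => ?_) fun hsP => ?_)
    · exact (eq_T P hP htwo).imp_right fun h => by rw [h]; exact hprin
    · refine (t.eq_span_pair_of_s_mem hπ hcop hN hP hsP).imp_right fun h => ⟨s, ?_⟩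
      rw [h, mul_comm]
      exact span_pair_mul_span_pair_eq_span_singleton hs hcop

end Tower

end TowerClasses

section TwoTorsion

open scoped nonZeroDivisors

section Group

theorem pow_eq_self_of_sq_eq_one {G : Type*} [Monoid G] {g : G} {n : ℕ} (hg : g ^ 2 = 1)
    (hn : Odd n) : g ^ n = g := by
  obtain ⟨k, rfl⟩ := hn
  rw [pow_succ, pow_mul, hg, one_pow, one_mul]

theorem zpow_eq_one_or_self {G : Type*} [Group G] {g : G} (hg : g ^ 2 = 1) (n : ℤ) :
    g ^ n = 1 ∨ g ^ n = g := by
  have hg' : g ^ (2 : ℤ) = 1 := by exact_mod_cast hg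
  rcases Int.even_or_odd' n with ⟨k, rfl | rfl⟩
  · left; rw [zpow_mul, hg', one_zpow]
  · right; rw [zpow_add, zpow_mul, hg', one_zpow, one_mul, zpow_one]

theorem eq_of_mem_closure_pair_of_sq_eq_one {G : Type*} [CommGroup G] {a b c : G} {n : ℕ}
    (hn : Odd n) (ha : a ^ 2 = 1) (hb : (b ^ n) ^ 2 = 1) (hc : c ^ 2 = 1)
    (h : c ∈ Subgroup.closure {a, b}) : c = 1 ∨ c = a ∨ c = b ^ n ∨ c = a * b ^ n := by
  obtain ⟨i, j, rfl⟩ := Subgroup.mem_closure_pair.1 h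
  have hpow : a ^ i * b ^ j = a ^ i * (b ^ n) ^ j := by
    conv_lhs => rw [← pow_eq_self_of_sq_eq_one hc hn, mul_pow, ← zpow_natCast, ← zpow_natCast,
      zpow_comm a, zpow_comm b, zpow_natCast, zpow_natCast, pow_eq_self_of_sq_eq_one ha hn]
  rw [hpow]
  rcases zpow_eq_one_or_self ha i with hi | hi <;>
    rcases zpow_eq_one_or_self hb j with hj | hj <;> simp [hi, hj]

end Group

section ClassGroup

variable {R S : Type*} [CommRing R] [IsDedekindDomain R] [CommRing S]

theorem mk0_pow_eq_one_iff (I : (Ideal R)⁰) (n : ℕ) :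
    ClassGroup.mk0 I ^ n = 1 ↔ ((I : Ideal R) ^ n).IsPrincipal := by
  rw [← map_pow, ← SubmonoidClass.coe_pow]
  exact ClassGroup.mk0_eq_one_iff (I ^ n).2

theorem exists_isPrincipal_mul_sq_of_sq_eq_mk0 {I : (Ideal R)⁰} {c : ClassGroup R}
    (h : c ^ 2 = ClassGroup.mk0 I) :
    ∃ J : (Ideal R)⁰, ((I : Ideal R) * (J : Ideal R) ^ 2).IsPrincipal := by
  obtain ⟨J, hJ⟩ := ClassGroup.mk0_surjective c⁻¹
  refine ⟨J, ?_⟩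
  rw [← SubmonoidClass.coe_pow, ← mk0_mul_eq_one_iff, map_pow, hJ, ← h, inv_pow, mul_inv_cancel]

theorem isPrincipal_pow_card_classGroup (I : Ideal R) :
    (I ^ Nat.card (ClassGroup R)).IsPrincipal := by
  rcases eq_or_ne I ⊥ with rfl | hI
  · rw [← Ideal.zero_eq_bot, zero_pow_eq]
    split_ifs
    · rw [Ideal.one_eq_top]
      exact top_isPrincipal
    · rw [Ideal.zero_eq_bot]
      exact bot_isPrincipal
  · exact (mk0_pow_eq_one_iff ⟨I, mem_nonZeroDivisors_of_ne_zero hI⟩ _).1 pow_card_eq_one'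

theorem isPrincipal_map_pow_card_classGroup (f : R →+* S) (I : Ideal R) :
    ((I.map f) ^ Nat.card (ClassGroup R)).IsPrincipal := by
  rw [← Ideal.map_pow]
  exact (isPrincipal_pow_card_classGroup I).map_ringHom f

end ClassGroup

/-- A class killed by `2` contains an invariant ideal, which factors into extended ideals and
ramified primes. -/
theorem IsQuadGen.mem_of_sq_eq_one {F L : Type*} [Field F] [Field L] [NumberField F]
    [NumberField L] [Algebra F L] {s : L} {σ : L ≃ₐ[F] L} (h : IsQuadGen s σ)
    (hnorm : ∀ (u : (𝓞 F)ˣ) (α : L), Algebra.norm F α = (u : 𝓞 F) →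
      ∃ e : (𝓞 L)ˣ, Algebra.norm F ((e : 𝓞 L) : L) = (u : 𝓞 F))
    (hpr : ∀ J : Ideal (𝓞 F), (J ^ 2).IsPrincipal → J.IsPrincipal)
    {H : Subgroup (ClassGroup (𝓞 L))}
    (hext : ∀ (J : Ideal (𝓞 F)) (I : (Ideal (𝓞 L))⁰),
      (I : Ideal (𝓞 L)) = J.map (algebraMap (𝓞 F) (𝓞 L)) → ClassGroup.mk0 I ∈ H)
    (hram : ∀ P : (Ideal (𝓞 L))⁰, (P : Ideal (𝓞 L)).IsPrime →
      (∀ z, z - intAut σ z ∈ (P : Ideal (𝓞 L))) → ClassGroup.mk0 P ∈ H)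
    {c : ClassGroup (𝓞 L)} (hc : c ^ 2 = 1) : c ∈ H := by
  obtain ⟨I, rfl⟩ := ClassGroup.mk0_surjective c
  have hI : (I : Ideal (𝓞 L)) ≠ ⊥ := nonZeroDivisors.ne_zero I.2
  obtain ⟨b, hb, hbI⟩ := h.exists_map_span_mul_eq hnorm hpr hI ((mk0_pow_eq_one_iff I 2).1 hc)
  have hb' : Ideal.span {b} ≠ ⊥ := by simpa using hb
  let S : Submonoid (Ideal (𝓞 L)) := (H.toSubmonoid.comap ClassGroup.mk0).map (Submonoid.subtype _)
  have hbIS : Ideal.span {b} * I ∈ S := by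
    refine h.mem_of_map_eq (fun J hJ => ?_) (fun P hP hP0 _ hPram => ?_) (mul_ne_zero hb' hI) hbI
    · have hJ' : J.map (algebraMap (𝓞 F) (𝓞 L)) ≠ ⊥ := by
        rwa [Ne, Ideal.map_eq_bot_iff_of_injective (FaithfulSMul.algebraMap_injective _ _)]
      exact ⟨⟨_, mem_nonZeroDivisors_of_ne_zero hJ'⟩, hext J _ rfl, rfl⟩
    · exact ⟨⟨P, mem_nonZeroDivisors_of_ne_zero hP0⟩, hram _ hP hPram, rfl⟩
  obtain ⟨I', hI', hII' : (I' : Ideal (𝓞 L)) = _⟩ := hbIS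
  have hmk : ClassGroup.mk0 I' = ClassGroup.mk0 I := by
    rw [show I' = ⟨_, mem_nonZeroDivisors_of_ne_zero hb'⟩ * I from Subtype.ext hII', map_mul,
      (ClassGroup.mk0_eq_one_iff _).2 ⟨b, rfl⟩, one_mul]
  exact hmk ▸ hI'

/-- With `I ^ n = (d)` and `n = 2 k + 1`, take `e = r ^ k * d / γ ^ k`. -/
theorem exists_algebraMap_eq_mul_sq_mul_unit {R : Type*} (F : Type*) [CommRing R] [IsDomain R]
    [Field F] [Algebra R F] [IsFractionRing R F] {I : Ideal R} {γ r : R} {n : ℕ} (hn : Odd n)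
    (hr : r ≠ 0) (hI : I ≠ ⊥) (hprin : (I ^ n).IsPrincipal)
    (hγ : Ideal.span {γ} = Ideal.span {r} * I ^ 2) :
    ∃ e : F, e ≠ 0 ∧ ∃ u : Rˣ, algebraMap R F γ = algebraMap R F r * e ^ 2 * algebraMap R F u := by
  obtain ⟨d, hd : I ^ n = Ideal.span {d}⟩ := hprin
  obtain ⟨k, rfl⟩ := hn
  have hd0 : d ≠ 0 := by
    rintro rfl
    exact pow_ne_zero _ hI (hd.trans Ideal.span_singleton_zero)
  have hγ0 : γ ≠ 0 := by
    rintro rfl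
    rw [Ideal.span_singleton_zero] at hγ
    exact mul_ne_zero (by simpa using hr) (pow_ne_zero 2 hI) hγ.symm
  have hspan : Ideal.span {r ^ (2 * k + 1) * d ^ 2} = Ideal.span {γ ^ (2 * k + 1)} := by
    rw [← Ideal.span_singleton_pow, hγ, mul_pow, Ideal.span_singleton_pow, pow_right_comm, hd,
      Ideal.span_singleton_pow, Ideal.span_singleton_mul_span_singleton]
  obtain ⟨u, hu⟩ := Ideal.span_singleton_eq_span_singleton.1 hspan
  have hinj := FaithfulSMul.algebraMap_injective R F
  have hγF : algebraMap R F γ ≠ 0 := (map_ne_zero_iff _ hinj).2 hγ0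
  have hdF : algebraMap R F d ≠ 0 := (map_ne_zero_iff _ hinj).2 hd0
  have hrF : algebraMap R F r ≠ 0 := (map_ne_zero_iff _ hinj).2 hr
  refine ⟨algebraMap R F r ^ k * algebraMap R F d / algebraMap R F γ ^ k,
    div_ne_zero (mul_ne_zero (pow_ne_zero k hrF) hdF) (pow_ne_zero k hγF), u, ?_⟩
  have huF := congrArg (algebraMap R F) hu
  simp only [map_mul, map_pow] at huF
  rw [div_pow, mul_div_assoc', div_mul_eq_mul_div, eq_div_iff (pow_ne_zero 2 (pow_ne_zero k hγF))]
  linear_combination -huF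

end TwoTorsion

section TowerTwoClassGroup

open scoped nonZeroDivisors

theorem RamifiedIdeals.mk0_T_pow_sq {M K : Type*} [Field M] [Field K] [NumberField M]
    [NumberField K] [Algebra M K] {p : ℕ} {σ : K ≃ₐ[M] K} {T P₁ : (Ideal (𝓞 K))⁰}
    (hr : RamifiedIdeals p σ T P₁) :
    (ClassGroup.mk0 T ^ Nat.card (ClassGroup (𝓞 M))) ^ 2 = 1 := by
  obtain ⟨J, hJ⟩ := hr.exists_sq_eq_map
  rw [pow_right_comm, ← map_pow, mk0_pow_eq_one_iff, SubmonoidClass.coe_pow, hJ]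
  exact isPrincipal_map_pow_card_classGroup _ J

variable {A B M K : Type*} [Field A] [Field B] [Field M] [Field K] [NumberField A] [NumberField B]
  [Algebra A M] [Algebra B M] [Algebra M K]

namespace Tower

variable {p q : ℕ} {a : 𝓞 A} {b : 𝓞 B} {ω : 𝓞 M} {s : 𝓞 K} {ρ : A ≃ₐ[ℚ] A}
    {β : B ≃ₐ[ℚ] B} {κ : M ≃ₐ[B] M} {τ : M ≃ₐ[A] M} {σ : K ≃ₐ[M] K}
    (t : Tower p q a b ω s ρ β κ τ σ)

include t

theorem unit_B_eq_one_or_eq_neg_one (u : (𝓞 B)ˣ) : u = 1 ∨ u = -1 := by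
  have hb : (b : B) ^ 2 = -(q : B) := by simpa using congrArg (algebraMap (𝓞 B) B) t.b_sq
  refine t.isQuadGen_β.unit_eq_one_or_eq_neg_one hb t.residues.prime_q.prime.not_isSquare ?_ u
  rintro ⟨k, hk⟩
  have hk8 : k * k % 8 = 5 := by have := t.residues.q_mod; omega
  rw [Nat.mul_mod] at hk8
  have : k % 8 < 8 := Nat.mod_lt _ (by norm_num)
  interval_cases k % 8 <;> omega

theorem nonempty_ringHom_padic_two : Nonempty (B →+* ℚ_[2]) := by
  have hb : (b : B) ^ 2 = ((-q : ℤ) : B) := by simpa using congrArg (algebraMap (𝓞 B) B) t.b_sq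
  obtain ⟨c, hc⟩ := exists_padic_two_sq_eq_of_mod_eight (n := -(q : ℤ))
    (by have := t.residues.q_mod; omega)
  exact t.isQuadGen_β.nonempty_ringHom hb hc

theorem coe_algebraMap_a_sq [Algebra A K] : (algebraMap A K a) ^ 2 = -2 := by
  rw [← map_pow, t.coe_a_sq, map_neg, map_ofNat]

theorem a_notMem_range_rat [Algebra A K] [CharZero K] :
    algebraMap A K a ∉ (algebraMap ℚ K).range := by
  rintro ⟨x, hx⟩
  refine t.isQuadGen_ρ.notMem_range ⟨x, (algebraMap A K).injective ?_⟩
  rw [← hx, eq_ratCast, eq_ratCast, map_ratCast]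

theorem a_notMem_range_B [Algebra A K] [Algebra B K] [IsScalarTower A M K] [IsScalarTower B M K] :
    algebraMap A K a ∉ (algebraMap B K).range := by
  rintro ⟨x, hx⟩
  refine t.isQuadGen_κ.notMem_range ⟨x, (algebraMap M K).injective ?_⟩
  rw [← IsScalarTower.algebraMap_apply, ← IsScalarTower.algebraMap_apply, hx]

section RationalNorm

variable [NumberField K] [Algebra A K]

theorem norm_nonneg (α : K) : 0 ≤ Algebra.norm ℚ α := by
  obtain ⟨x, y, hxy⟩ := exists_norm_eq_sq_sub_mul_sq (d := (-2 : ℚ)) (s := algebraMap A K a)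
    (by simp [t.coe_algebraMap_a_sq]) t.a_notMem_range_rat α
  rw [hxy]
  nlinarith [sq_nonneg x, sq_nonneg y]

variable [IsScalarTower A M K]

theorem norm_ne_two_mul_sq (α : K) {n : ℕ} (hn : n ≠ 0) : Algebra.norm ℚ α ≠ 2 * n ^ 2 := by
  intro h
  have : Fact p.Prime := ⟨t.residues.prime_p⟩
  have hs : (s : K) ∉ (algebraMap ℚ K).range := by
    rintro ⟨x, hx⟩
    exact t.s_notMem_range_A ⟨x, by rw [map_ratCast, ← hx, eq_ratCast]⟩
  obtain ⟨z, w, hzw⟩ := exists_norm_eq_sq_sub_mul_sq (d := (p : ℚ)) (by simp [t.coe_s_sq]) hs α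
  have hpadic : (z : ℚ_[p]) ^ 2 - (2 : ℤ) * (n : ℚ_[p]) ^ 2 = p * (w : ℚ_[p]) ^ 2 := by
    have hzwn : z ^ 2 - 2 * (n : ℚ) ^ 2 = p * w ^ 2 := by linear_combination h - hzw
    exact_mod_cast congrArg (Rat.cast : ℚ → ℚ_[p]) hzwn
  have hn0 := padic_eq_zero_of_sq_sub_mul_sq_eq (by simpa using t.residues.two_p) hpadic
  exact hn (by exact_mod_cast hn0)

theorem not_isPrincipal_of_absNorm_eq {I : Ideal (𝓞 K)} {n : ℕ} (hn : n ≠ 0)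
    (hI : Ideal.absNorm I = 2 * n ^ 2) : ¬ I.IsPrincipal := by
  rintro ⟨α, rfl⟩
  rw [Ideal.submodule_span_eq, Ideal.absNorm_span_singleton] at hI
  have hα : 0 ≤ Algebra.norm ℤ α := by
    exact_mod_cast (Algebra.coe_norm_int α).symm ▸ t.norm_nonneg (α : K)
  apply t.norm_ne_two_mul_sq (α : K) hn
  rw [← Algebra.coe_norm_int, ← Int.natAbs_of_nonneg hα, hI]
  push_cast
  rfl

end RationalNorm

theorem span_p_eq_comap [Algebra B K] {P : Ideal (𝓞 K)} (hP : P ≠ ⊤) (hpP : (p : 𝓞 K) ∈ P) :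
    Ideal.span {(p : 𝓞 B)} = P.comap (algebraMap (𝓞 B) (𝓞 K)) := by
  have hpcomap : (p : 𝓞 B) ∈ P.comap (algebraMap (𝓞 B) (𝓞 K)) := by
    rwa [Ideal.mem_comap, map_natCast]
  refine ideal_eq_of_le_of_absNorm_le (by simpa using t.residues.prime_p.ne_zero)
    ((Ideal.span_singleton_le_iff_mem _).2 hpcomap) ?_
  rw [Ideal.absNorm_span_natCast, RingOfIntegers.rank,
    t.isQuadGen_β.isQuadraticExtension.finrank_eq_two]
  exact sq_le_absNorm_of_not_isSquare (z := b) (n := -q) (Ideal.comap_ne_top _ hP)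
    t.residues.prime_p hpcomap (by simp [t.b_sq]) (by simpa using t.residues.neg_q_p)

section RelativeNorm

variable [NumberField K] [Algebra B K]

theorem relNorm_eq_span_p {P : Ideal (𝓞 K)} (hP : Ideal.absNorm P = p ^ 2) (hpP : (p : 𝓞 K) ∈ P) :
    Ideal.relNorm (𝓞 B) P = Ideal.span {(p : 𝓞 B)} := by
  have hp := t.residues.prime_p
  have hP' : P ≠ ⊤ := by
    rintro rfl
    rw [Ideal.absNorm_top] at hP
    exact (Nat.one_lt_pow two_ne_zero hp.one_lt).ne hP
  have hnorm : Ideal.absNorm (Ideal.relNorm (𝓞 B) P) = p ^ 2 := by rw [Ideal.absNorm_relNorm, hP]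
  refine ideal_eq_of_le_of_absNorm_le ?_ ?_ ?_
  · rw [Ne, ← Ideal.absNorm_eq_zero_iff, hnorm]
    exact pow_ne_zero 2 hp.ne_zero
  · rw [t.span_p_eq_comap hP' hpP]
    exact Ideal.relNorm_le_comap _ _
  · rw [hnorm, Ideal.absNorm_span_natCast, RingOfIntegers.rank,
      t.isQuadGen_β.isQuadraticExtension.finrank_eq_two]

variable [IsScalarTower B M K]

theorem norm_ne_p_mul_sq (α : K) {e : B} (he : e ≠ 0) : Algebra.norm B α ≠ p * e ^ 2 := by
  intro h
  obtain ⟨z, w, hzw⟩ := exists_norm_eq_sq_sub_mul_sq (d := (p : B)) (by simp [t.coe_s_sq])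
    t.s_notMem_range_B α
  obtain ⟨f⟩ := t.nonempty_ringHom_padic_two
  have he' : f e ≠ 0 := by simpa using he
  have hf := congrArg f (hzw.symm.trans h)
  simp only [map_sub, map_mul, map_pow, map_natCast] at hf
  apply padic_two_sq_ne_mul_one_add_sq t.residues.p_mod (f z / f e) (f w / f e)
  field_simp
  linear_combination hf

theorem norm_ne_neg_p_mul_sq [Algebra A K] [IsScalarTower A M K] (α : K) {e : B} (he : e ≠ 0) :
    Algebra.norm B α ≠ -(p * e ^ 2) := by
  intro h
  obtain ⟨x, y, hxy⟩ := exists_norm_eq_sq_sub_mul_sq (d := (-2 : B)) (s := algebraMap A K a)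
    (by rw [t.coe_algebraMap_a_sq, map_neg, map_ofNat]) t.a_notMem_range_B α
  obtain ⟨f⟩ := t.nonempty_ringHom_padic_two
  have he' : f e ≠ 0 := by simpa using he
  have hf := congrArg f (hxy.symm.trans h)
  simp only [map_sub, map_mul, map_pow, map_natCast, map_neg, map_ofNat] at hf
  apply padic_two_sq_add_two_mul_sq_ne_neg t.residues.p_mod (f x / f e) (f y / f e)
  field_simp
  linear_combination hf

variable [NumberField M]

omit t in
theorem isPrincipal_relNorm_pow_card_classGroup (J : Ideal (𝓞 K)) :
    (Ideal.relNorm (𝓞 B) J ^ Nat.card (ClassGroup (𝓞 M))).IsPrincipal := by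
  obtain ⟨c, hc : _ = Ideal.span {c}⟩ :=
    isPrincipal_pow_card_classGroup (Ideal.relNorm (𝓞 M) J)
  refine ⟨Algebra.intNorm (𝓞 B) (𝓞 M) c, ?_⟩
  rw [← Ideal.relNorm_relNorm (𝓞 B) (𝓞 M), ← map_pow, hc, Ideal.relNorm_singleton,
    Ideal.submodule_span_eq]

theorem not_isPrincipal_mul_sq [Algebra A K] [IsScalarTower A M K] {P J : Ideal (𝓞 K)}
    (hJ : J ≠ ⊥) (hP : Ideal.absNorm P = p ^ 2) (hpP : (p : 𝓞 K) ∈ P) :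
    ¬ (P * J ^ 2).IsPrincipal := by
  rintro ⟨α, hα : _ = Ideal.span {α}⟩
  have hγ : Ideal.span {Algebra.intNorm (𝓞 B) (𝓞 K) α} =
      Ideal.span {(p : 𝓞 B)} * Ideal.relNorm (𝓞 B) J ^ 2 := by
    rw [← Ideal.relNorm_singleton, ← hα, map_mul, map_pow, t.relNorm_eq_span_p hP hpP]
  obtain ⟨e, he, u, hu⟩ := exists_algebraMap_eq_mul_sq_mul_unit B t.odd_card_classGroup
    (Nat.cast_ne_zero.2 t.residues.prime_p.ne_zero) (by rwa [Ne, Ideal.relNorm_eq_bot_iff])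
    (isPrincipal_relNorm_pow_card_classGroup J) hγ
  have hnorm : algebraMap (𝓞 B) B (Algebra.intNorm (𝓞 B) (𝓞 K) α) = Algebra.norm B (α : K) :=
    Algebra.algebraMap_intNorm _
  rw [hnorm, map_natCast] at hu
  rcases t.unit_B_eq_one_or_eq_neg_one u with rfl | rfl
  · exact t.norm_ne_p_mul_sq (α : K) he (by simpa using hu)
  · exact t.norm_ne_neg_p_mul_sq (α : K) he (by simpa using hu)

end RelativeNorm

variable [NumberField K] [Algebra A K] {T P₁ : (Ideal (𝓞 K))⁰}

theorem sq_ne_mk0_P₁_pow_mul_mk0_T_pow [IsScalarTower A M K] (hr : RamifiedIdeals p σ T P₁)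
    (i : ℕ) {n : ℕ} (hn : Odd n) (c : ClassGroup (𝓞 K)) :
    c ^ 2 ≠ ClassGroup.mk0 P₁ ^ i * ClassGroup.mk0 T ^ n := by
  intro hc
  rw [← map_pow, ← map_pow, ← map_mul] at hc
  obtain ⟨J, hJ⟩ := exists_isPrincipal_mul_sq_of_sq_eq_mk0 hc
  obtain ⟨k, rfl⟩ := hn
  have hJ0 : Ideal.absNorm (J : Ideal (𝓞 K)) ≠ 0 :=
    Ideal.absNorm_eq_zero_iff.not.2 (nonZeroDivisors.ne_zero J.2)
  refine t.not_isPrincipal_of_absNorm_eq (n := p ^ i * 2 ^ k * Ideal.absNorm (J : Ideal (𝓞 K)))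
    (mul_ne_zero (mul_ne_zero (pow_ne_zero i t.residues.prime_p.ne_zero) (by simp)) hJ0) ?_ hJ
  simp only [Submonoid.coe_mul, SubmonoidClass.coe_pow, map_mul, map_pow, hr.absNorm_P₁,
    hr.absNorm_T]
  ring

variable [NumberField M]

theorem mk0_eq_of_sq_eq_one [IsScalarTower A M K] (hr : RamifiedIdeals p σ T P₁)
    {c : ClassGroup (𝓞 K)} (hc : c ^ 2 = 1) :
    c = 1 ∨ c = ClassGroup.mk0 P₁ ∨ c = ClassGroup.mk0 T ^ Nat.card (ClassGroup (𝓞 M)) ∨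
      c = ClassGroup.mk0 P₁ * ClassGroup.mk0 T ^ Nat.card (ClassGroup (𝓞 M)) := by
  have hodd := t.odd_card_classGroup
  refine eq_of_mem_closure_pair_of_sq_eq_one hodd ((mk0_pow_eq_one_iff _ _).2 hr.isPrincipal_sq)
    hr.mk0_T_pow_sq hc ?_
  have hmem := t.isQuadGen_σ.mem_of_sq_eq_one t.exists_unit_norm_eq
    (fun J => t.isQuadGen_ρ.isPrincipal_of_isPrincipal_sq t.coe_a_sq t.isQuadGen_τ t.coe_b_sq
      t.residues)
    (H := (Subgroup.closure {ClassGroup.mk0 P₁, ClassGroup.mk0 T}).comap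
      (powMonoidHom (Nat.card (ClassGroup (𝓞 M))))) ?_ ?_ hc
  · rwa [Subgroup.mem_comap, powMonoidHom_apply, pow_eq_self_of_sq_eq_one hc hodd] at hmem
  · intro J I hI
    have hone : ClassGroup.mk0 I ^ Nat.card (ClassGroup (𝓞 M)) = 1 := by
      rw [mk0_pow_eq_one_iff, hI]
      exact isPrincipal_map_pow_card_classGroup _ J
    rw [Subgroup.mem_comap, powMonoidHom_apply, hone]
    exact one_mem _
  · intro P hP hram
    exact pow_mem (hr.mk0_mem_closure P hP hram) _

theorem sq_ne_mk0_P₁ [Algebra B K] [IsScalarTower A M K] [IsScalarTower B M K]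
    (hr : RamifiedIdeals p σ T P₁) (c : ClassGroup (𝓞 K)) : c ^ 2 ≠ ClassGroup.mk0 P₁ := by
  intro hc
  obtain ⟨J, hJ⟩ := exists_isPrincipal_mul_sq_of_sq_eq_mk0 hc
  exact t.not_isPrincipal_mul_sq (nonZeroDivisors.ne_zero J.2) hr.absNorm_P₁ hr.natCast_mem hJ

theorem nonempty_sylow_two_classGroup_mulEquiv [Algebra B K] [IsScalarTower A M K]
    [IsScalarTower B M K]
    (P : Sylow 2 (ClassGroup (𝓞 K))) :
    Nonempty (↥(P : Subgroup (ClassGroup (𝓞 K))) ≃* Multiplicative (ZMod 2 × ZMod 2)) := by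
  obtain ⟨T, P₁, hr⟩ := t.exists_ramifiedIdeals (K := K)
  refine nonempty_sylow_two_mulEquiv ((mk0_pow_eq_one_iff P₁ 2).2 hr.isPrincipal_sq)
    hr.mk0_T_pow_sq (fun c hc => t.mk0_eq_of_sq_eq_one hr hc) (t.sq_ne_mk0_P₁ hr)
    (fun c => ?_) (fun c => ?_) P
  · simpa using t.sq_ne_mk0_P₁_pow_mul_mk0_T_pow hr 0 t.odd_card_classGroup c
  · simpa using t.sq_ne_mk0_P₁_pow_mul_mk0_T_pow hr 1 t.odd_card_classGroup c

end Tower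

end TowerTwoClassGroup

section Multiquadratic

theorem notMem_adjoin_singleton {F K : Type*} [Field F] [Field K] [Algebra F K] [NeZero (2 : F)]
    {r z : K} {d e : F} (hd : algebraMap F K d = r ^ 2) (he : algebraMap F K e = z ^ 2)
    (hz : z ∉ (algebraMap F K).range) (hzr : z * r ∉ (algebraMap F K).range) : z ∉ F⟮r⟯ := by
  intro hmem
  obtain ⟨x, y, hxy⟩ := exists_eq_add_mul_of_mem_adjoin hd hmem
  exact (mem_range_or_mul_mem_range_of_sq_eq hd he hxy).elim hz hzr

variable {K : Type*} [Field K]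

theorem notMem_range_algebraMap {F : Type*} [Field F] [Algebra F K] {E : IntermediateField F K}
    {z : K} (hz : z ∉ E) : z ∉ (algebraMap E K).range := by
  rintro ⟨x, rfl⟩
  exact hz x.2

theorem mem_adjoin_adjoin_singleton {F : Type*} [Field F] [Algebra F K] {S : Set K} {s z : K}
    (hz : z ∈ adjoin F (S ∪ {s})) : z ∈ (adjoin F S)⟮s⟯ := by
  rwa [← adjoin_adjoin_left, mem_restrictScalars] at hz

theorem exists_isQuadGen_of_mem_adjoin {E L : Type*} [Field E] [Field L] [Algebra E L]
    [Algebra.IsSeparable E L] [Algebra E K] [Algebra L K] [IsScalarTower E L K] {s : L} {d : E}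
    (hd : algebraMap E L d = s ^ 2) (hs : algebraMap L K s ∉ (algebraMap E K).range)
    (hgen : ∀ z : L, algebraMap L K z ∈ E⟮algebraMap L K s⟯) :
    ∃ σ : L ≃ₐ[E] L, IsQuadGen s σ := by
  refine exists_isQuadGen hd ?_ fun z => ?_
  · rintro ⟨x, rfl⟩
    exact hs ⟨x, IsScalarTower.algebraMap_apply E L K x⟩
  · obtain ⟨x, y, hxy⟩ := exists_eq_add_mul_of_mem_adjoin (d := d)
      (by rw [IsScalarTower.algebraMap_apply E L K, hd, map_pow]) (hgen z)
    refine ⟨x, y, (algebraMap L K).injective ?_⟩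
    rw [hxy, map_add, map_mul, ← IsScalarTower.algebraMap_apply, ← IsScalarTower.algebraMap_apply]

variable [CharZero K]

theorem notMem_range_algebraMap_rat {z : K} {n : ℤ} (hz : z ^ 2 = n) (hn : ¬ IsSquare n) :
    z ∉ (algebraMap ℚ K).range := by
  rintro ⟨x, rfl⟩
  refine hn (Rat.isSquare_intCast_iff.1 ⟨x, (algebraMap ℚ K).injective ?_⟩)
  rw [map_intCast, ← hz, map_mul, sq]

theorem notMem_adjoin_rat_singleton {r z : K} {m n : ℤ} (hr : r ^ 2 = m) (hz : z ^ 2 = n)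
    (hn : ¬ IsSquare n) (hnm : ¬ IsSquare (n * m)) : z ∉ ℚ⟮r⟯ :=
  notMem_adjoin_singleton (d := (m : ℚ)) (e := (n : ℚ)) (by simp [hr]) (by simp [hz])
    (notMem_range_algebraMap_rat hz hn)
    (notMem_range_algebraMap_rat (by rw [mul_pow, hz, hr, Int.cast_mul]) hnm)

theorem exists_isQuadGen_adjoin_rat_singleton {r : K} {n : ℤ} (hr : r ^ 2 = n)
    (hn : ¬ IsSquare n) : ∃ ρ : ℚ⟮r⟯ ≃ₐ[ℚ] ℚ⟮r⟯, IsQuadGen (AdjoinSimple.gen ℚ r) ρ := by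
  have hint : IsIntegral ℚ r := .of_pow two_pos (hr ▸ isIntegral_intCast n)
  have : Algebra.IsAlgebraic ℚ ℚ⟮r⟯ := isAlgebraic_adjoin_simple hint
  exact exists_isQuadGen_of_mem_adjoin (K := K) (d := (n : ℚ)) (Subtype.ext (by simp [hr]))
    (notMem_range_algebraMap_rat hr hn) fun z => z.2

theorem notMem_adjoin_rat_pair {r s z : K} {l m n : ℤ} (hr : r ^ 2 = l) (hs : s ^ 2 = m)
    (hz : z ^ 2 = n) (hn : ¬ IsSquare n) (hnl : ¬ IsSquare (n * l)) (hnm : ¬ IsSquare (n * m))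
    (hnml : ¬ IsSquare (n * m * l)) : z ∉ adjoin ℚ ({r} ∪ {s}) := by
  intro hmem
  refine notMem_adjoin_singleton (d := (m : ℚ⟮r⟯)) (e := (n : ℚ⟮r⟯)) (by simp [hs]) (by simp [hz])
    (notMem_range_algebraMap ?_) (notMem_range_algebraMap ?_) (mem_adjoin_adjoin_singleton hmem)
  · exact notMem_adjoin_rat_singleton hr hz hn hnl
  · exact notMem_adjoin_rat_singleton hr (by rw [mul_pow, hz, hs, Int.cast_mul]) hnm hnml

end Multiquadratic

namespace Residues

variable {p q : ℕ} (h : Residues p q)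
include h

theorem exists_tower {A B M K : Type*} [Field A] [Field B] [Field M] [Field K] [NumberField A]
    [NumberField B] [CharZero M] [Algebra A M] [Algebra B M] [Algebra M K] {x : A} {y : B} {z : K}
    {ρ : A ≃ₐ[ℚ] A} {β : B ≃ₐ[ℚ] B} {κ : M ≃ₐ[B] M} {τ : M ≃ₐ[A] M} {σ : K ≃ₐ[M] K}
    (hx : x ^ 2 = -2) (hy : y ^ 2 = -q) (hz : z ^ 2 = p) (hρ : IsQuadGen x ρ)
    (hβ : IsQuadGen y β) (hκ : IsQuadGen (algebraMap A M x) κ)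
    (hτ : IsQuadGen (algebraMap B M y) τ) (hσ : IsQuadGen z σ) :
    ∃ a b ω s, Tower p q a b ω s ρ β κ τ σ := by
  obtain ⟨a, rfl, ha⟩ := exists_coe_eq_of_sq_eq (n := -2) (by simpa using hx)
  obtain ⟨b, rfl, hb⟩ := exists_coe_eq_of_sq_eq (n := -q) (by simpa using hy)
  obtain ⟨s, rfl, hs⟩ := exists_coe_eq_of_sq_eq (n := p) (by simpa using hz)
  obtain ⟨ω, hω⟩ := exists_coe_eq_one_add_div_two (r := algebraMap B M b) (q := q)
    (by rw [← map_pow, hy, map_neg, map_natCast]) (by have := h.q_mod; omega)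
  have hω' : 2 * ω = 1 + algebraMap (𝓞 B) (𝓞 M) b := by
    have hbM : algebraMap (𝓞 M) M (algebraMap (𝓞 B) (𝓞 M) b) = algebraMap B M b := rfl
    refine RingOfIntegers.coe_injective ?_
    simp only [map_mul, map_add, map_one, map_ofNat, hω, hbM]
    ring
  exact ⟨a, b, ω, s, ⟨h, by simpa using ha, by simpa using hb, by simpa using hs, hω', hρ, hβ, hκ,
    hτ, hσ⟩⟩

section Independence

variable {K : Type*} [Field K] [CharZero K] {r s t : K} (hr : r ^ 2 = -2) (hs : s ^ 2 = -(q : K))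
include hr hs

theorem sqrt_neg_two_notMem : r ∉ ℚ⟮s⟯ := by
  have := h.q_mod
  refine notMem_adjoin_rat_singleton (m := -q) (n := -2) (by simpa using hs) (by simpa using hr)
    (fun hsq => absurd hsq.nonneg (by norm_num)) ?_
  rw [neg_mul_neg, ← Nat.cast_ofNat, ← Nat.cast_mul, Int.isSquare_natCast_iff]
  exact not_isSquare_of_mod_four_eq_two (by omega)

theorem sqrt_neg_q_notMem : s ∉ ℚ⟮r⟯ := by
  have := h.q_mod
  refine notMem_adjoin_rat_singleton (m := -2) (n := -q) (by simpa using hr) (by simpa using hs)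
    (fun hsq => absurd hsq.nonneg (by omega)) ?_
  rw [neg_mul_neg, ← Nat.cast_ofNat, ← Nat.cast_mul, Int.isSquare_natCast_iff]
  exact not_isSquare_of_mod_four_eq_two (by omega)

theorem sqrt_p_notMem (ht : t ^ 2 = p) : t ∉ adjoin ℚ ({r} ∪ {s}) := by
  have hp := h.p_mod
  have hq := h.q_mod
  have hpos : (0 : ℤ) < p * q := by
    exact_mod_cast Nat.mul_pos h.prime_p.pos h.prime_q.pos
  refine notMem_adjoin_rat_pair (l := -2) (m := -q) (n := p) (by simpa using hr)
    (by simpa using hs) (by simpa using ht) ?_ (fun hsq => absurd hsq.nonneg (by omega))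
    (fun hsq => absurd hsq.nonneg (by linarith)) ?_
  · rw [Int.isSquare_natCast_iff]
    exact h.prime_p.prime.not_isSquare
  · have hmod : p * q * 2 % 4 = 2 := by
      have : p * q % 2 = 1 :=
        Nat.odd_iff.1 ((Nat.odd_iff.2 (by omega)).mul (Nat.odd_iff.2 (by omega)))
      omega
    rw [show (p * -q * -2 : ℤ) = (p * q * 2 : ℕ) by push_cast; ring, Int.isSquare_natCast_iff]
    exact not_isSquare_of_mod_four_eq_two hmod

end Independence

theorem nonempty_sylow_two_classGroup_mulEquiv {K : Type*} [Field K] [NumberField K] {r s t : K}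
    (hr : r ^ 2 = -2) (hs : s ^ 2 = -(q : K)) (ht : t ^ 2 = p) (hK : adjoin ℚ {r, s, t} = ⊤)
    (P : Sylow 2 (ClassGroup (𝓞 K))) :
    Nonempty (↥(P : Subgroup (ClassGroup (𝓞 K))) ≃* Multiplicative (ZMod 2 × ZMod 2)) := by
  let M := adjoin ℚ ({r} ∪ {s})
  have hAM : ℚ⟮r⟯ ≤ M := adjoin.mono _ _ _ Set.subset_union_left
  have hBM : ℚ⟮s⟯ ≤ M := adjoin.mono _ _ _ Set.subset_union_right
  let _ := (inclusion hAM).toRingHom.toAlgebra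
  let _ := (inclusion hBM).toRingHom.toAlgebra
  have : IsScalarTower ℚ⟮r⟯ M K := .of_algebraMap_eq fun _ => rfl
  have : IsScalarTower ℚ⟮s⟯ M K := .of_algebraMap_eq fun _ => rfl
  have hx : AdjoinSimple.gen ℚ r ^ 2 = -2 := (algebraMap ℚ⟮r⟯ K).injective
    (by rw [map_pow, AdjoinSimple.algebraMap_gen, hr, map_neg, map_ofNat])
  have hy : AdjoinSimple.gen ℚ s ^ 2 = -q := (algebraMap ℚ⟮s⟯ K).injective
    (by rw [map_pow, AdjoinSimple.algebraMap_gen, hs, map_neg, map_natCast])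
  obtain ⟨ρ, hρ⟩ := exists_isQuadGen_adjoin_rat_singleton (r := r) (n := -2) (by simpa using hr)
    (by decide)
  obtain ⟨β, hβ⟩ := exists_isQuadGen_adjoin_rat_singleton (r := s) (n := -q) (by simpa using hs)
    fun hsq => absurd hsq.nonneg (by have := h.q_mod; omega)
  obtain ⟨τ, hτ⟩ := exists_isQuadGen_of_mem_adjoin (E := ℚ⟮r⟯) (K := K) (d := -q)
    (s := algebraMap ℚ⟮s⟯ M (AdjoinSimple.gen ℚ s)) (by simp [← map_pow, hy])
    (notMem_range_algebraMap (h.sqrt_neg_q_notMem hr hs)) fun z => mem_adjoin_adjoin_singleton z.2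
  obtain ⟨κ, hκ⟩ := exists_isQuadGen_of_mem_adjoin (E := ℚ⟮s⟯) (K := K) (d := -2)
    (s := algebraMap ℚ⟮r⟯ M (AdjoinSimple.gen ℚ r))
    (by rw [← map_pow, hx, map_neg, map_neg, map_ofNat, map_ofNat])
    (notMem_range_algebraMap (h.sqrt_neg_two_notMem hr hs))
    fun z => mem_adjoin_adjoin_singleton (Set.union_comm {r} {s} ▸ z.2)
  obtain ⟨σ, hσ⟩ := exists_isQuadGen_of_mem_adjoin (E := M) (K := K) (d := p)
    (s := t) (by simp [ht]) (notMem_range_algebraMap (h.sqrt_p_notMem hr hs ht))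
    fun z => mem_adjoin_adjoin_singleton (s := t) (by
      rw [Set.union_assoc, Set.singleton_union, Set.singleton_union, hK]
      exact mem_top)
  obtain ⟨_, _, _, _, tower⟩ := h.exists_tower hx hy ht hρ hβ hκ hτ hσ
  exact tower.nonempty_sylow_two_classGroup_mulEquiv P

end Residues

theorem adjoin_eq_top_of_subset_adjoin_image {F E L : Type*} [Field F] [Field E] [Field L]
    [Algebra F E] [Algebra F L] (f : E →ₐ[F] L) {S : Set E} {T : Set L}
    (hT : ∀ x, f x ∈ adjoin F T) (hTS : T ⊆ adjoin F (f '' S)) : adjoin F S = ⊤ := by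
  refine map_injective f (le_antisymm (map_mono f le_top) ?_)
  rintro _ ⟨x, -, rfl⟩
  rw [adjoin_map]
  exact adjoin_le_iff.2 hTS (hT x)

theorem ofReal_sqrt_sq {x : ℝ} (hx : 0 ≤ x) : (√x : ℂ) ^ 2 = x := by
  rw [← Complex.ofReal_pow, Real.sq_sqrt hx]

theorem I_mul_sqrt_two_sq : (Complex.I * (√2 : ℝ)) ^ 2 = -2 := by
  rw [mul_pow, Complex.I_sq, ofReal_sqrt_sq zero_le_two, Complex.ofReal_ofNat, neg_one_mul]

theorem Ff.exists_generators (p q : ℕ) :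
    ∃ r s t : Ff p q, r ^ 2 = -2 ∧ s ^ 2 = -q ∧ t ^ 2 = p ∧ adjoin ℚ {r, s, t} = ⊤ := by
  let r : Ff p q := ⟨_, subset_adjoin ℚ _ (.inr (.inr rfl))⟩
  let t : Ff p q := ⟨_, subset_adjoin ℚ _ (.inl rfl)⟩
  let u : Ff p q := ⟨_, subset_adjoin ℚ _ (.inr (.inl rfl))⟩
  have hr : r ^ 2 = -2 := Subtype.ext I_mul_sqrt_two_sq
  have ht : t ^ 2 = p := Subtype.ext (by simp [t, ofReal_sqrt_sq])
  have hu : u ^ 2 = 2 * q := Subtype.ext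
    ((ofReal_sqrt_sq (by positivity)).trans (by push_cast; rfl))
  have hs : (u * r / 2) ^ 2 = -q := by
    rw [div_pow, mul_pow, hu, hr]
    ring
  -- `(Ff p q).val` is an algebra map for another `ℚ`-algebra structure on `Ff p q`.
  let f : Ff p q →ₐ[ℚ] ℂ := (Ff p q).val.toRingHom.toRatAlgHom
  refine ⟨r, u * r / 2, t, hr, hs, ht, adjoin_eq_top_of_subset_adjoin_image f (fun x => x.2) ?_⟩
  have mem_adjoin {x : Ff p q} (hx : x ∈ ({r, u * r / 2, t} : Set _)) :
      f x ∈ adjoin ℚ (f '' {r, u * r / 2, t}) := subset_adjoin ℚ _ ⟨x, hx, rfl⟩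
  have hur : f u = -(f (u * r / 2) * f r) := by
    rw [← map_mul, ← map_neg]
    congr 1
    linear_combination (u / 2) * hr
  rintro _ (rfl | rfl | rfl)
  · exact mem_adjoin (.inr (.inr rfl))
  · change f u ∈ _
    rw [hur]
    exact neg_mem (mul_mem (mem_adjoin (.inr (.inl rfl))) (mem_adjoin (.inl rfl)))
  · exact mem_adjoin (.inl rfl)

theorem statement8 (p q : ℕ) (h : Cond2 p q) [NumberField ↥(Ff p q)]
    (P : Sylow 2 (ClassGroup (𝓞 ↥(Ff p q)))) :
    Nonempty (↥(P : Subgroup (ClassGroup (𝓞 ↥(Ff p q)))) ≃*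
      Multiplicative (ZMod 2 × ZMod 2)) := by
  obtain ⟨r, s, t, hr, hs, ht, hadjoin⟩ := Ff.exists_generators p q
  exact h.residues.nonempty_sylow_two_classGroup_mulEquiv hr hs ht hadjoin P
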